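/- arXiv:2003.07265 — 2 statements merged into one kernel-verified Lean document; each statement's English description precedes it below -/
import Mathlib

section
/- Let Ω ⊂ ℝⁿ be a bounded domain. Then there exists a constant C > 0 such that, for every nontrivial finite positive Radon measure μ0 on Ω for which the geodesic distance d_Ω̂ belongs to L¹(μ0), one can find a measurable weight w0 on Ω satisfying: (A) w0 ∈ L¹(Ω) for the Lebesgue measure and w0(x) > 0 for Lebesgue-almost every x ∈ Ω; and (B) for every κ > 0 and every finite signed Radon measure μ on Ω with μ(Ω) = 0 and |μ| ≤ κ μ0, there exists a measurable vector field u : Ω → ℝⁿ with |u(x)| ≤ C κ w0(x) for almost every x ∈ Ω and such that ∫_Ω u·∇φ dx = −∫_Ω φ dμ for every φ ∈ C^∞(ℝⁿ) with compact support. -/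
open MeasureTheory Metric Set
open scoped RealInnerProductSpace ENNReal NNReal

noncomputable section

/-- `ℝⁿ` as a Euclidean space. -/
abbrev En (n : ℕ) := EuclideanSpace ℝ (Fin n)

/-- The geodesic distance, within the set `U`, from the point `x` to the base point `x0`:
the infimum of the lengths (total variations) of rectifiable curves joining `x` to `x0`
inside `U` (non-rectifiable curves have infinite length, so they do not affect the
infimum). -/
def geoDist {X : Type*} [PseudoEMetricSpace X] (U : Set X) (x0 x : X) : ℝ≥0∞ :=
  ⨅ (γ : ℝ → X) (_ : ContinuousOn γ (Set.Icc 0 1)) (_ : Set.MapsTo γ (Set.Icc 0 1) U)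
    (_ : γ 0 = x) (_ : γ 1 = x0), eVariationOn γ (Set.Icc 0 1)

/-- The open measurable cover `Ω̂` associated with a measurable cover `Ω̃`:
`Ω̂ = {x ∈ Ω̃ : dist(x, ℝⁿ \ Ω̃) > 0}`. -/
def hatSet {n : ℕ} (Ot : Set (En n)) : Set (En n) :=
  {x ∈ Ot | 0 < Metric.infDist x Otᶜ}

/-- The integral `∫_s f dμ` of a function against a signed measure, defined through the
Jordan decomposition of `μ`. -/
def signedIntegral {n : ℕ} (μ : MeasureTheory.SignedMeasure (En n)) (s : Set (En n))
    (f : En n → ℝ) : ℝ :=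
  (∫ x in s, f x ∂μ.toJordanDecomposition.posPart) -
    ∫ x in s, f x ∂μ.toJordanDecomposition.negPart

/-!
Join each `x` to the base point by a polyline in `Ω̂` whose length exceeds the geodesic distance by
at most a constant, and widen it to a tube whose radius grows from `0` at `x` to a fixed `r₀` at the
base point. The polylines `c j + ρ j • b`, with `b` uniform in the unit ball, sweep out the tube.
Drawing `x` from `μ0` and `b` independently gives a random polyline, of finite expected length since
the geodesic distance is `μ0`-integrable. The widening makes the law of its position at each time
`t ∈ (0, 1]` of each edge absolutely continuous, so its expected occupation measure has a density
`w0 ∈ L¹`.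

If `μ = g μ0` with `|g| ≤ κ`, then weighting each polyline by `g x` and averaging its tangent
vectors gives a field `u` with `|u| ≤ κ w0`, and integrating `∇φ` along the polylines gives
`∫ u·∇φ = E[g x * (φ (x₀ + r₀ b) - φ x)]`. The end points `x₀ + r₀ b` are independent of `x`, so
their contribution vanishes when `μ` has total mass zero, and `-∫ φ dμ` remains.
-/

open AffineMap Filter Topology
open scoped Gradient

section TransportDensity

open ProbabilityTheory

variable {X T V : Type*} [MeasurableSpace X] [MeasurableSpace T] [NormedAddCommGroup V]

/-- The scalar transport density, with respect to `ν`, of a flow whose particles `p` are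
distributed according to `τ` and pass through `ξ p` with velocity `v p`: the density of the
image under `ξ` of the measure `‖v‖ τ`. -/
def transportDensity (τ : Measure T) (ν : Measure X) (ξ : T → X) (v : T → V) (y : X) : ℝ :=
  (((τ.withDensity (‖v ·‖ₑ)).map ξ).rnDeriv ν y).toReal

lemma transportDensity_nonneg (τ : Measure T) (ν : Measure X) (ξ : T → X) (v : T → V) (y : X) :
    0 ≤ transportDensity τ ν ξ v y :=
  ENNReal.toReal_nonneg

lemma measurable_transportDensity (τ : Measure T) (ν : Measure X) (ξ : T → X) (v : T → V) :
    Measurable (transportDensity τ ν ξ v) :=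
  (Measure.measurable_rnDeriv _ _).ennreal_toReal

lemma integrable_transportDensity {τ : Measure T} (ν : Measure X) (ξ : T → X) {v : T → V}
    (hv : Integrable v τ) : Integrable (transportDensity τ ν ξ v) ν :=
  have := isFiniteMeasure_withDensity hv.2.ne
  Measure.integrable_toReal_rnDeriv

variable [StandardBorelSpace T] [Nonempty T] [InnerProductSpace ℝ V] [CompleteSpace V]
  [MeasurableSpace V] [BorelSpace V] [SecondCountableTopology V]

-- `u y` is the mean of `e` on the fibre `ξ ⁻¹' {y}`, given by the disintegration of `θ` along `ξ`.
lemma exists_fibre_mean (θ : Measure T) [IsFiniteMeasure θ] {ξ : T → X} (hξ : Measurable ξ)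
    {e : T → V} (he : Measurable e) {κ : ℝ} (heκ : ∀ p, ‖e p‖ ≤ κ) :
    ∃ u : X → V, Measurable u ∧ (∀ y, ‖u y‖ ≤ κ) ∧
      ∀ F : X → V, Measurable F → (∃ M, ∀ y, ‖F y‖ ≤ M) →
        ∫ y, ⟪u y, F y⟫ ∂(θ.map ξ) = ∫ p, ⟪e p, F (ξ p)⟫ ∂θ := by
  let η : Kernel X T := condDistrib id ξ θ
  have he_int : ∀ y, Integrable e (η y) := fun y ↦
    .of_bound he.aestronglyMeasurable κ (ae_of_all _ heκ)
  refine ⟨fun y ↦ ∫ p, e p ∂(η y), ?_, fun y ↦ ?_, ?_⟩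
  · exact (he.stronglyMeasurable.integral_kernel (κ := η)).measurable
  · simpa using norm_integral_le_of_norm_le_const (μ := η y) (ae_of_all _ heκ)
  rintro F hF ⟨M, hM⟩
  have hinner : Measurable fun z : X × T ↦ ⟪e z.2, F z.1⟫ :=
    (he.comp measurable_snd).inner (hF.comp measurable_fst)
  have hinner_le : ∀ z : X × T, ‖⟪e z.2, F z.1⟫‖ ≤ κ * M := fun z ↦
    (norm_inner_le_norm _ _).trans <|
      mul_le_mul (heκ _) (hM _) (norm_nonneg _) ((norm_nonneg _).trans (heκ z.2))
  calc
    ∫ y, ⟪∫ p, e p ∂(η y), F y⟫ ∂(θ.map ξ)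
    _ = ∫ y, ∫ p, ⟪e p, F y⟫ ∂(η y) ∂(θ.map ξ) := by
      refine integral_congr_ae (ae_of_all _ fun y ↦ ?_)
      simp only [real_inner_comm (F y), integral_inner (he_int y)]
    _ = ∫ z, ⟪e z.2, F z.1⟫ ∂(θ.map ξ ⊗ₘ η) :=
      (Measure.integral_compProd (.of_bound hinner.aestronglyMeasurable _
        (ae_of_all _ hinner_le))).symm
    _ = ∫ p, ⟪e p, F (ξ p)⟫ ∂θ := by
      rw [compProd_map_condDistrib aemeasurable_id,
        integral_map (hξ.prodMk measurable_id).aemeasurable hinner.aestronglyMeasurable]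
      rfl

lemma exists_field_le_transportDensity {τ : Measure T} {ν : Measure X} [SigmaFinite ν]
    {ξ : T → X} (hξ : Measurable ξ) (hac : τ.map ξ ≪ ν) {v : T → V} (hvm : Measurable v)
    (hv : Integrable v τ) {g : T → ℝ} (hg : Measurable g) {κ : ℝ} (hgκ : ∀ p, |g p| ≤ κ) :
    ∃ u : X → V, Measurable u ∧ (∀ y, ‖u y‖ ≤ κ * transportDensity τ ν ξ v y) ∧
      ∀ F : X → V, Measurable F → (∃ M, ∀ y, ‖F y‖ ≤ M) →
        ∫ y, ⟪u y, F y⟫ ∂ν = ∫ p, g p * ⟪v p, F (ξ p)⟫ ∂τ := by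
  let θ := τ.withDensity (‖v ·‖ₑ)
  have : IsFiniteMeasure θ := isFiniteMeasure_withDensity hv.2.ne
  have hθac : θ.map ξ ≪ ν := ((withDensity_absolutelyContinuous τ _).map hξ).trans hac
  let e : T → V := fun p ↦ g p • ‖v p‖⁻¹ • v p
  have he : Measurable e := hg.smul (hvm.norm.inv.smul hvm)
  have heκ : ∀ p, ‖e p‖ ≤ κ := fun p ↦ by
    rw [norm_smul, norm_smul, norm_inv, norm_norm]
    exact (mul_le_of_le_one_right (abs_nonneg _) inv_mul_le_one).trans (hgκ p)
  obtain ⟨u, hu, huκ, hu_inner⟩ := exists_fibre_mean θ hξ he heκ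
  refine ⟨fun y ↦ transportDensity τ ν ξ v y • u y,
    (measurable_transportDensity τ ν ξ v).smul hu, fun y ↦ ?_, fun F hF hFb ↦ ?_⟩
  · have hdensity := transportDensity_nonneg τ ν ξ v y
    rw [norm_smul, mul_comm, Real.norm_of_nonneg hdensity]
    exact mul_le_mul_of_nonneg_right (huκ y) hdensity
  have hspeed : ∀ p, ‖v p‖ * ⟪e p, F (ξ p)⟫ = g p * ⟪v p, F (ξ p)⟫ := fun p ↦ by
    rcases eq_or_ne (v p) 0 with hp | hp
    · simp [hp]
    · simp only [e, real_inner_smul_left]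
      field_simp [norm_ne_zero_iff.2 hp]
  calc
    ∫ y, ⟪transportDensity τ ν ξ v y • u y, F y⟫ ∂ν
    _ = ∫ y, ⟪u y, F y⟫ ∂(θ.map ξ) := by
      simp only [real_inner_smul_left]
      exact integral_toReal_rnDeriv_mul hθac
    _ = ∫ p, ‖v p‖ * ⟪e p, F (ξ p)⟫ ∂τ := by
      rw [hu_inner F hF hFb, integral_withDensity_eq_integral_toReal_smul hvm.enorm
        (ae_of_all _ fun p ↦ enorm_lt_top)]
      simp only [toReal_enorm, smul_eq_mul]
    _ = ∫ p, g p * ⟪v p, F (ξ p)⟫ ∂τ := by simp only [hspeed]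

end TransportDensity

section Gradient

variable {E : Type*} [NormedAddCommGroup E] [InnerProductSpace ℝ E] [CompleteSpace E] {φ : E → ℝ}

lemma continuous_gradient (hφ : ContDiff ℝ 1 φ) : Continuous (∇ φ) :=
  (InnerProductSpace.toDual ℝ E).symm.continuous.comp (hφ.continuous_fderiv one_ne_zero)

lemma exists_norm_gradient_le (hφ : ContDiff ℝ 1 φ) (hφc : HasCompactSupport φ) :
    ∃ M, ∀ y, ‖∇ φ y‖ ≤ M :=
  (continuous_gradient hφ).bounded_above_of_compact_support <|
    (hφc.fderiv ℝ).comp_left (map_zero (InnerProductSpace.toDual ℝ E).symm)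

lemma setIntegral_inner_gradient_lineMap (hφ : ContDiff ℝ 1 φ) (a b : E) :
    ∫ t in Ioc (0 : ℝ) 1, ⟪b - a, ∇ φ (lineMap a b t)⟫ = φ b - φ a := by
  have hderiv : ∀ t : ℝ, HasDerivAt (fun t ↦ φ (lineMap a b t))
      ⟪b - a, ∇ φ (lineMap a b t)⟫ t := fun t ↦ by
    rw [real_inner_comm, inner_gradient_left]
    exact ((hφ.differentiable one_ne_zero _).hasFDerivAt).comp_hasDerivAt t hasDerivAt_lineMap
  have hcont : Continuous fun t : ℝ ↦ ⟪b - a, ∇ φ (lineMap a b t)⟫ :=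
    continuous_const.inner ((continuous_gradient hφ).comp lineMap_continuous)
  rw [← intervalIntegral.integral_of_le zero_le_one,
    intervalIntegral.integral_eq_sub_of_hasDerivAt (fun t _ ↦ hderiv t)
      (hcont.intervalIntegrable _ _), lineMap_apply_one, lineMap_apply_zero]

lemma integral_inner_gradient_of_tendsto (hφ : ContDiff ℝ 1 φ) {a : ℕ → E} {b : E}
    (ha : Tendsto a atTop (𝓝 b))
    (hint : Integrable
      (fun z : ℕ × ℝ ↦ ⟪a (z.1 + 1) - a z.1, ∇ φ (lineMap (a z.1) (a (z.1 + 1)) z.2)⟫)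
      (Measure.count.prod (volume.restrict (Ioc 0 1)))) :
    ∫ z : ℕ × ℝ, ⟪a (z.1 + 1) - a z.1, ∇ φ (lineMap (a z.1) (a (z.1 + 1)) z.2)⟫
      ∂(Measure.count.prod (volume.restrict (Ioc 0 1))) = φ b - φ (a 0) := by
  have hsum := hint.integral_prod_left
  rw [integral_prod _ hint]
  simp only [setIntegral_inner_gradient_lineMap hφ] at hsum ⊢
  have htele : Tendsto (fun N ↦ ∑ j ∈ Finset.range N, (φ (a (j + 1)) - φ (a j))) atTop
      (𝓝 (φ b - φ (a 0))) := by
    simp only [Finset.sum_range_sub fun j ↦ φ (a j)]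
    exact ((hφ.continuous.tendsto b).comp ha).sub_const _
  have hcount : ∀ j : ℕ, (Measure.count : Measure ℕ).real {j} = 1 := by simp [Measure.real]
  simp only [integral_countable hsum, hcount, one_smul]
  exact tendsto_nhds_unique (integrable_count_iff.1 hsum).of_norm.hasSum.tendsto_sum_nat htele

end Gradient

section RandomPolyline

variable {S E : Type*} [MeasurableSpace S]

/-- The product measure on the parameters `(s, j, t)` of a random infinite polyline: `s` is the
random outcome, `j` the index of an edge and `t ∈ (0, 1]` the time along that edge. -/
def polylineMeasure (P : Measure S) : Measure (S × ℕ × ℝ) :=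
  P.prod (Measure.count.prod (volume.restrict (Ioc 0 1)))

/-- The vector of the edge containing the parameter `(s, j, t)` of the polyline with vertices
`q 0 s, q 1 s, …`. -/
def polylineEdge [AddGroup E] (q : ℕ → S → E) (p : S × ℕ × ℝ) : E :=
  q (p.2.1 + 1) p.1 - q p.2.1 p.1

/-- The point with parameter `(s, j, t)` of the polyline with vertices `q 0 s, q 1 s, …`. -/
def polylinePoint [AddCommGroup E] [Module ℝ E] (q : ℕ → S → E) (p : S × ℕ × ℝ) : E :=
  lineMap (q p.2.1 p.1) (q (p.2.1 + 1) p.1) p.2.2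

variable [MeasurableSpace E] {q : ℕ → S → E}

lemma measurable_polyline_vertex (hq : ∀ j, Measurable (q j)) (k : ℕ) :
    Measurable fun p : S × ℕ × ℝ ↦ q (p.2.1 + k) p.1 :=
  (measurable_from_prod_countable_left (f := fun a : S × ℕ ↦ q (a.2 + k) a.1)
    fun j ↦ hq (j + k)).comp (measurable_fst.prodMk (measurable_fst.comp measurable_snd))

variable [NormedAddCommGroup E] [BorelSpace E] [SecondCountableTopology E]

lemma measurable_polylineEdge (hq : ∀ j, Measurable (q j)) : Measurable (polylineEdge q) :=
  (measurable_polyline_vertex hq 1).sub (measurable_polyline_vertex hq 0)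

lemma measurable_polylinePoint [NormedSpace ℝ E] (hq : ∀ j, Measurable (q j)) :
    Measurable (polylinePoint q) := by
  unfold polylinePoint
  simp only [lineMap_apply_module]
  have htime : Measurable fun p : S × ℕ × ℝ ↦ p.2.2 := measurable_snd.comp measurable_snd
  exact ((htime.const_sub 1).smul (measurable_polyline_vertex hq 0)).add
    (htime.smul (measurable_polyline_vertex hq 1))

lemma integrable_polylineEdge {P : Measure S} (hq : ∀ j, Measurable (q j))
    (hlen : ∫⁻ s, ∑' j, edist (q j s) (q (j + 1) s) ∂P ≠ ⊤) :
    Integrable (polylineEdge q) (polylineMeasure P) := by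
  have hedge : Measurable (polylineEdge q) := measurable_polylineEdge hq
  refine ⟨hedge.aestronglyMeasurable, lt_of_le_of_lt ?_ hlen.lt_top⟩
  rw [polylineMeasure, lintegral_prod _ hedge.enorm.aemeasurable]
  refine lintegral_mono fun s ↦ ?_
  have hedge_s : Measurable fun z : ℕ × ℝ ↦ ‖polylineEdge q (s, z)‖ₑ :=
    hedge.enorm.comp measurable_prodMk_left
  rw [lintegral_prod _ hedge_s.aemeasurable, lintegral_count]
  simp [polylineEdge, ← edist_eq_enorm_sub, edist_comm]

lemma map_polylinePoint_absolutelyContinuous [NormedSpace ℝ E] {P : Measure S} [SFinite P]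
    (hq : ∀ j, Measurable (q j)) {ν : Measure E}
    (hac : ∀ j, ∀ t ∈ Ioc (0 : ℝ) 1, P.map (fun s ↦ lineMap (q j s) (q (j + 1) s) t) ≪ ν) :
    (polylineMeasure P).map (polylinePoint q) ≪ ν := by
  have hpoint : Measurable (polylinePoint q) := measurable_polylinePoint hq
  refine .mk fun A hA hνA ↦ ?_
  rw [Measure.map_apply hpoint hA, polylineMeasure, Measure.prod_apply_symm (hpoint hA),
    lintegral_eq_zero_iff (measurable_measure_prodMk_right (hpoint hA))]
  have htime : ∀ᵐ z ∂(Measure.count : Measure ℕ).prod (volume.restrict (Ioc (0 : ℝ) 1)),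
      z.2 ∈ Ioc (0 : ℝ) 1 :=
    Measure.quasiMeasurePreserving_snd.ae (ae_restrict_mem measurableSet_Ioc)
  filter_upwards [htime] with z hz
  have hslice : P.map (fun s ↦ polylinePoint q (s, z)) A = 0 := hac z.1 z.2 hz hνA
  have hpoint_z : Measurable fun s ↦ polylinePoint q (s, z) := hpoint.comp measurable_prodMk_right
  rwa [Measure.map_apply hpoint_z hA] at hslice

end RandomPolyline

section PolylineFlow

variable {S E : Type*} [MeasurableSpace S] [NormedAddCommGroup E] [InnerProductSpace ℝ E]
  [CompleteSpace E] [MeasurableSpace E] [BorelSpace E] [SecondCountableTopology E]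
  {P : Measure S} [SFinite P] {q : ℕ → S → E} {q_end : S → E}

lemma integral_mul_inner_gradient_polyline (hq : ∀ j, Measurable (q j))
    (hlen : ∫⁻ s, ∑' j, edist (q j s) (q (j + 1) s) ∂P ≠ ⊤)
    (hlim : ∀ᵐ s ∂P, Tendsto (q · s) atTop (𝓝 (q_end s)))
    {g : S → ℝ} (hg : Measurable g) {κ : ℝ} (hgκ : ∀ s, |g s| ≤ κ)
    {φ : E → ℝ} (hφ : ContDiff ℝ 1 φ) (hφc : HasCompactSupport φ) :
    ∫ p, g p.1 * ⟪polylineEdge q p, ∇ φ (polylinePoint q p)⟫ ∂(polylineMeasure P) =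
      ∫ s, g s * (φ (q_end s) - φ (q 0 s)) ∂P := by
  obtain ⟨M, hM⟩ := exists_norm_gradient_le hφ hφc
  have hinner : Integrable (fun p ↦ ⟪polylineEdge q p, ∇ φ (polylinePoint q p)⟫)
      (polylineMeasure P) := by
    refine ((integrable_polylineEdge hq hlen).norm.mul_const M).mono' ?_
      (ae_of_all _ fun p ↦ (norm_inner_le_norm _ _).trans (by gcongr; exact hM _))
    exact ((measurable_polylineEdge hq).inner ((continuous_gradient hφ).measurable.comp
      (measurable_polylinePoint hq))).aestronglyMeasurable
  have hg_inner : Integrable (fun p : S × ℕ × ℝ ↦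
      g p.1 * ⟪polylineEdge q p, ∇ φ (polylinePoint q p)⟫) (polylineMeasure P) :=
    hinner.bdd_mul (hg.comp measurable_fst).aestronglyMeasurable (ae_of_all _ fun p ↦ hgκ p.1)
  rw [polylineMeasure, integral_prod _ hg_inner]
  refine integral_congr_ae ?_
  filter_upwards [hlim, hinner.prod_right_ae] with s hs hs_int
  simp only [integral_const_mul]
  exact congrArg _ (integral_inner_gradient_of_tendsto hφ hs hs_int)

lemma exists_measurable_pos_integrable {X : Type*} [MeasurableSpace X] (ν : Measure X)
    [SigmaFinite ν] : ∃ f : X → ℝ, Measurable f ∧ (∀ x, 0 < f x) ∧ Integrable f ν := by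
  obtain ⟨f, hf_pos, hf, hf_int⟩ := exists_pos_lintegral_lt_of_sigmaFinite ν one_ne_zero
  refine ⟨fun x ↦ f x, hf.coe_nnreal_real, hf_pos, hf.coe_nnreal_real.aestronglyMeasurable, ?_⟩
  simpa [HasFiniteIntegral] using hf_int.trans ENNReal.one_lt_top

-- The transport density vanishes off the polylines, so a positive integrable function is added.
theorem exists_weight_of_random_polyline [StandardBorelSpace S] [Nonempty S] {ν : Measure E}
    [SigmaFinite ν] (hq : ∀ j, Measurable (q j))
    (hlen : ∫⁻ s, ∑' j, edist (q j s) (q (j + 1) s) ∂P ≠ ⊤)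
    (hlim : ∀ᵐ s ∂P, Tendsto (q · s) atTop (𝓝 (q_end s)))
    (hac : ∀ j, ∀ t ∈ Ioc (0 : ℝ) 1, P.map (fun s ↦ lineMap (q j s) (q (j + 1) s) t) ≪ ν) :
    ∃ w : E → ℝ, Measurable w ∧ (∀ x, 0 < w x) ∧ Integrable w ν ∧
      ∀ (κ : ℝ) (g : S → ℝ), Measurable g → (∀ s, |g s| ≤ κ) →
        ∃ u : E → E, Measurable u ∧ (∀ x, ‖u x‖ ≤ κ * w x) ∧
          ∀ φ : E → ℝ, ContDiff ℝ 1 φ → HasCompactSupport φ →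
            ∫ x, ⟪u x, ∇ φ x⟫ ∂ν = ∫ s, g s * (φ (q_end s) - φ (q 0 s)) ∂P := by
  have hedge := integrable_polylineEdge hq hlen
  obtain ⟨f, hf, hf_pos, hf_int⟩ := exists_measurable_pos_integrable ν
  let density := transportDensity (polylineMeasure P) ν (polylinePoint q) (polylineEdge q)
  refine ⟨fun x ↦ density x + f x, (measurable_transportDensity ..).add hf,
    fun x ↦ add_pos_of_nonneg_of_pos (transportDensity_nonneg ..) (hf_pos x),
    (integrable_transportDensity _ _ hedge).add hf_int, fun κ g hg hgκ ↦ ?_⟩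
  obtain ⟨u, hu, huκ, hu_inner⟩ := exists_field_le_transportDensity (measurable_polylinePoint hq)
    (map_polylinePoint_absolutelyContinuous hq hac) (measurable_polylineEdge hq) hedge
    (hg.comp measurable_fst) fun p ↦ hgκ p.1
  have hκ : 0 ≤ κ := (abs_nonneg _).trans (hgκ (Classical.arbitrary S))
  refine ⟨u, hu, fun x ↦ (huκ x).trans ?_, fun φ hφ hφc ↦ ?_⟩
  · gcongr
    exact le_add_of_nonneg_right (hf_pos x).le
  · rw [hu_inner _ (continuous_gradient hφ).measurable (exists_norm_gradient_le hφ hφc)]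
    exact integral_mul_inner_gradient_polyline hq hlen hlim hg hgκ hφ hφc

end PolylineFlow

section Polyline

lemma exists_mem_le_biInf_add_one {α : Type*} {s : Set α} (hs : s.Nonempty) (f : α → ℝ≥0∞) :
    ∃ x ∈ s, f x ≤ (⨅ y ∈ s, f y) + 1 := by
  rcases eq_or_ne (⨅ y ∈ s, f y) ⊤ with htop | htop
  · exact hs.imp fun x hx ↦ ⟨hx, by simp [htop]⟩
  · obtain ⟨x, hx, hlt⟩ : ∃ x ∈ s, f x < (⨅ y ∈ s, f y) + 1 := by
      simpa only [iInf_lt_iff, exists_prop] using ENNReal.lt_add_right htop one_ne_zero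
    exact ⟨x, hx, hlt.le⟩

lemma exists_curve_eVariationOn_le {X : Type*} [PseudoEMetricSpace X] {U : Set X} {x₀ x : X}
    (hx : x ∈ pathComponentIn U x₀) :
    ∃ γ : ℝ → X, ContinuousOn γ (Icc 0 1) ∧ MapsTo γ (Icc 0 1) U ∧ γ 0 = x ∧ γ 1 = x₀ ∧
      eVariationOn γ (Icc 0 1) ≤ geoDist U x₀ x + 1 := by
  let curves : Set (ℝ → X) :=
    {γ | ContinuousOn γ (Icc 0 1) ∧ MapsTo γ (Icc 0 1) U ∧ γ 0 = x ∧ γ 1 = x₀}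
  have hcurves : curves.Nonempty := by
    obtain ⟨γ, hγ⟩ := JoinedIn.symm hx
    refine ⟨γ.extend, γ.continuous_extend.continuousOn, fun t ht ↦ ?_, by simp, by simp⟩
    rw [γ.extend_apply ht]
    exact hγ _
  obtain ⟨γ, ⟨hcont, hmaps, h0, h1⟩, hle⟩ :=
    exists_mem_le_biInf_add_one hcurves fun γ ↦ eVariationOn γ (Icc 0 1)
  refine ⟨γ, hcont, hmaps, h0, h1, hle.trans_eq ?_⟩
  simp only [curves, geoDist, mem_ofPred_eq, iInf_and]

lemma geoDist_eq_top {X : Type*} [PseudoEMetricSpace X] {U : Set X} {x₀ x : X}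
    (hx : x ∉ pathComponentIn U x₀) : geoDist U x₀ x = ⊤ := by
  simp only [geoDist, iInf_eq_top]
  intro γ hcont hmaps h0 h1
  refine absurd (JoinedIn.symm ?_) hx
  exact JoinedIn.ofLine hcont h0 h1 hmaps.image_subset

lemma add_smul_mem_ball {E : Type*} [NormedAddCommGroup E] [NormedSpace ℝ E] (x : E) {ρ r : ℝ}
    (hρ : 0 < ρ) (hρr : ρ ≤ r) {b : E} (hb : b ∈ ball (0 : E) 1) : x + ρ • b ∈ ball x r := by
  rw [mem_ball_zero_iff] at hb
  rw [mem_ball_iff_norm, add_sub_cancel_left, norm_smul, Real.norm_of_nonneg hρ.le]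
  nlinarith

variable {E : Type*} [NormedAddCommGroup E] [NormedSpace ℝ E] {U : Set E}

lemma exists_polyline_of_curve (hU : IsOpen U) {γ : ℝ → E} (hγ : ContinuousOn γ (Icc 0 1))
    (hγU : MapsTo γ (Icc 0 1) U) :
    ∃ δ > 0, ∃ (p : ℕ → E) (m : ℕ), p 0 = γ 0 ∧ (∀ i ≥ m, p i = γ 1) ∧
      (∀ i, ∀ e ∈ ball (0 : E) δ, segment ℝ (p i + e) (p (i + 1) + e) ⊆ U) ∧
      ∑' i, edist (p i) (p (i + 1)) ≤ eVariationOn γ (Icc 0 1) := by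
  obtain ⟨δ, hδ, hthick⟩ :=
    (isCompact_Icc.image_of_continuousOn hγ).exists_thickening_subset_open hU hγU.image_subset
  let cover : Icc (0 : ℝ) 1 → Set (Icc (0 : ℝ) 1) := fun s ↦ {t | γ t ∈ ball (γ s) (δ / 2)}
  have hcover_open : ∀ s, IsOpen (cover s) := fun s ↦ isOpen_ball.preimage hγ.domRestrict
  have hcover : univ ⊆ ⋃ s, cover s := fun s _ ↦ mem_iUnion.2 ⟨s, mem_ball_self (half_pos hδ)⟩
  obtain ⟨t, ht0, ht_mono, ⟨m, hm⟩, ht⟩ :=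
    exists_monotone_Icc_subset_open_cover_Icc zero_le_one hcover_open hcover
  refine ⟨δ / 2, half_pos hδ, fun i ↦ γ (t i), m, congrArg γ ht0, fun i hi ↦ congrArg γ (hm i hi),
    fun i e he ↦ ?_, ENNReal.tsum_le_of_sum_range_le fun N ↦ ?_⟩
  · obtain ⟨s, hs⟩ := ht i
    have hstep : t i ≤ t (i + 1) := ht_mono i.le_succ
    have hshift : ∀ a ∈ ball (γ s) (δ / 2), a + e ∈ ball (γ s) δ := fun a ha ↦ by
      rw [mem_ball_zero_iff] at he
      rw [mem_ball] at ha ⊢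
      have hdist : dist (a + e) a = ‖e‖ := by simp
      linarith [dist_triangle (a + e) a (γ s)]
    calc
      segment ℝ (γ (t i) + e) (γ (t (i + 1)) + e) ⊆ ball (γ s) δ :=
        (convex_ball _ _).segment_subset (hshift _ (hs (left_mem_Icc.2 hstep)))
          (hshift _ (hs (right_mem_Icc.2 hstep)))
      _ ⊆ thickening δ (γ '' Icc 0 1) := ball_subset_thickening (mem_image_of_mem γ s.2) δ
      _ ⊆ U := hthick
  · simp_rw [edist_comm (γ (t _)) (γ (t (_ + 1)))]
    exact eVariationOn.sum_le (f := γ) (u := fun i ↦ (t i : ℝ)) ht_mono fun i ↦ (t i).2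

end Polyline

section Tube

variable {E : Type*} [NormedAddCommGroup E] [NormedSpace ℝ E]

/-- A tube in `U` from the point `x` to the ball `ball x₀ r₀`: a polyline with vertices `c j` that
starts at `x` and ends at `x₀`, thickened so that the radius `ρ j` at `c j` grows from `0` to `r₀`.
The tube is swept out by the polylines with vertices `c j + ρ j • b`, one for each `b` in the unit
ball. -/
structure IsTube (U : Set E) (x x₀ : E) (r₀ : ℝ) (c : ℕ → E) (ρ : ℕ → ℝ) : Prop where
  center_zero : c 0 = x
  radius_zero : ρ 0 = 0
  radius_pos : ∀ j, 0 < ρ (j + 1)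
  radius_mono : Monotone ρ
  eventually_eq : ∀ᶠ j in atTop, c j = x₀ ∧ ρ j = r₀
  segment_subset : ∀ j, ∀ b ∈ ball (0 : E) 1,
    segment ℝ (c j + ρ j • b) (c (j + 1) + ρ (j + 1) • b) ⊆ U

lemma IsTube.tsum_edist_radius_le {U : Set E} {x x₀ : E} {r₀ : ℝ} {c : ℕ → E} {ρ : ℕ → ℝ}
    (h : IsTube U x x₀ r₀ c ρ) : ∑' j, edist (ρ j) (ρ (j + 1)) ≤ ENNReal.ofReal r₀ := by
  refine ENNReal.tsum_le_of_sum_range_le fun N ↦ ?_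
  have hle : ρ N ≤ r₀ := h.radius_mono.ge_of_tendsto
    (tendsto_nhds_of_eventually_eq (h.eventually_eq.mono fun _ hj ↦ hj.2)) N
  calc
    ∑ j ∈ Finset.range N, edist (ρ j) (ρ (j + 1))
    _ = ∑ j ∈ Finset.range N, ENNReal.ofReal (ρ (j + 1) - ρ j) := by
      refine Finset.sum_congr rfl fun j _ ↦ ?_
      rw [edist_comm, edist_dist, Real.dist_eq,
        abs_of_nonneg (sub_nonneg.2 (h.radius_mono j.le_succ))]
    _ = ENNReal.ofReal (ρ N) := by
      rw [← ENNReal.ofReal_sum_of_nonneg fun j _ ↦ sub_nonneg.2 (h.radius_mono j.le_succ),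
        Finset.sum_range_sub ρ, h.radius_zero, sub_zero]
    _ ≤ ENNReal.ofReal r₀ := ENNReal.ofReal_le_ofReal hle

/-- The sequence `a, s 0, s 1, …`. -/
def seqCons {α : Type*} (a : α) (s : ℕ → α) : ℕ → α
  | 0 => a
  | j + 1 => s j

variable {U : Set E} {x₀ y : E} {r₀ : ℝ}

-- The tube widens from `x` to radius `ρ` inside a ball around `y`, follows `p` at constant radius
-- `ρ`, and widens to radius `r₀` once the polyline has come to rest at `x₀`.
lemma isTube_of_polyline {p : ℕ → E} {m : ℕ} {δ ρ r : ℝ} {x : E} (hball : ball x₀ r₀ ⊆ U)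
    (hy : ball y (2 * r) ⊆ U) (hp0 : p 0 ∈ ball y r) (hpm : ∀ i ≥ m, p i = x₀)
    (hp : ∀ i, ∀ e ∈ ball (0 : E) δ, segment ℝ (p i + e) (p (i + 1) + e) ⊆ U)
    (hρ : 0 < ρ) (hρδ : ρ ≤ δ) (hρr : ρ ≤ r) (hρr₀ : ρ ≤ r₀) (hx : x ∈ ball y r) :
    IsTube U x x₀ r₀ (seqCons x p) (seqCons 0 fun j ↦ if j ≤ m then ρ else r₀) where
  center_zero := rfl
  radius_zero := rfl
  radius_pos j := by
    simp only [seqCons]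
    split_ifs <;> linarith
  radius_mono := by
    refine monotone_nat_of_le_succ ?_
    rintro (_ | j) <;> simp only [seqCons] <;> split_ifs <;> first | omega | linarith
  eventually_eq := by
    filter_upwards [eventually_ge_atTop (m + 2)] with j hj
    obtain ⟨i, rfl⟩ := Nat.exists_eq_succ_of_ne_zero (by omega : j ≠ 0)
    exact ⟨hpm i (by omega), if_neg (by omega)⟩
  segment_subset := by
    rintro (_ | j) b hb
    · have hwide : p 0 + ρ • b ∈ ball y (2 * r) := by
        have := add_smul_mem_ball (p 0) hρ hρr hb
        rw [mem_ball] at this hp0 ⊢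
        linarith [dist_triangle (p 0 + ρ • b) (p 0) y]
      simpa [seqCons] using ((convex_ball y (2 * r)).segment_subset
        (ball_subset_ball (by linarith) hx) hwide).trans hy
    · simp only [seqCons]
      rcases lt_or_ge j m with hj | hj
      · rw [if_pos hj.le, if_pos (by omega)]
        exact hp j _ (by simpa using add_smul_mem_ball 0 hρ hρδ hb)
      · rw [hpm j hj, hpm (j + 1) (by omega)]
        refine ((convex_ball x₀ r₀).segment_subset ?_ ?_).trans hball <;>
          split_ifs <;> exact add_smul_mem_ball x₀ (by linarith) (by linarith) hb

lemma exists_isTube_of_mem_ball (hU : IsOpen U) (hr₀ : 0 < r₀) (hball : ball x₀ r₀ ⊆ U)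
    (hy : y ∈ pathComponentIn U x₀) :
    ∃ r > 0, ∃ (p : ℕ → E) (s : ℕ → ℝ), ∀ x ∈ ball y r,
      IsTube U x x₀ r₀ (seqCons x p) (seqCons 0 s) ∧
      ∑' j, edist (seqCons x p j) (seqCons x p (j + 1)) ≤ geoDist U x₀ x + 3 := by
  obtain ⟨R, hR, hRU⟩ := Metric.isOpen_iff.1 (hU.pathComponentIn x₀) y hy
  let r : ℝ := min (R / 2) (1 / 2)
  have hr : 0 < r := by positivity
  have hrR : 2 * r ≤ R := by linarith [min_le_left (R / 2) (1 / 2)]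
  have hr_le : r ≤ 1 / 2 := min_le_right _ _
  obtain ⟨z, hz, hz_le⟩ := exists_mem_le_biInf_add_one ⟨y, mem_ball_self hr⟩ (geoDist U x₀)
  have hz_mem : z ∈ pathComponentIn U x₀ := hRU (ball_subset_ball (by linarith) hz)
  obtain ⟨γ, hγ, hγU, hγ0, hγ1, hγ_le⟩ := exists_curve_eVariationOn_le hz_mem
  obtain ⟨δ, hδ, p, m, hp0, hpm, hp, hp_le⟩ := exists_polyline_of_curve hU hγ hγU
  rw [hγ0] at hp0
  rw [hγ1] at hpm
  refine ⟨r, hr, p, fun j ↦ if j ≤ m then min δ (min r r₀) else r₀,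
    fun x hx ↦ ⟨isTube_of_polyline hball ?_ (hp0 ▸ hz) hpm hp (by positivity) (min_le_left _ _)
      ((min_le_right _ _).trans (min_le_left _ _))
      ((min_le_right _ _).trans (min_le_right _ _)) hx, ?_⟩⟩
  · exact (ball_subset_ball hrR).trans (hRU.trans pathComponentIn_subset)
  have hxz : edist x z ≤ 1 := by
    rw [edist_dist, ENNReal.ofReal_le_one]
    rw [mem_ball] at hx hz
    linarith [dist_triangle_right x z y]
  calc
    ∑' j, edist (seqCons x p j) (seqCons x p (j + 1))
    _ = edist x z + ∑' j, edist (p j) (p (j + 1)) := by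
      rw [tsum_eq_zero_add' ENNReal.summable, ← hp0]
      rfl
    _ ≤ 1 + (geoDist U x₀ x + 1 + 1) := by
      have hz_le_x : geoDist U x₀ z ≤ geoDist U x₀ x + 1 :=
        hz_le.trans (by gcongr; exact iInf₂_le x hx)
      gcongr
      exact hp_le.trans (hγ_le.trans (by gcongr))
    _ = geoDist U x₀ x + 3 := by ring

lemma exists_measurable_index {X : Type*} [TopologicalSpace X] [SecondCountableTopology X]
    [MeasurableSpace X] [OpensMeasurableSpace X] {V : Set X} (hV : MeasurableSet V)
    (hne : V.Nonempty) {N : X → Set X} (hN : ∀ y ∈ V, IsOpen (N y)) (hmem : ∀ y ∈ V, y ∈ N y) :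
    ∃ (Y : ℕ → X) (k : X → ℕ), Measurable k ∧ (∀ i, Y i ∈ V) ∧ ∀ x ∈ V, x ∈ N (Y (k x)) := by
  obtain ⟨S, hSV, hS, hcover⟩ := TopologicalSpace.countable_cover_nhdsWithin
    fun y hy ↦ mem_nhdsWithin_of_mem_nhds ((hN y hy).mem_nhds (hmem y hy))
  have hSne : S.Nonempty := by
    obtain ⟨x, hx⟩ := hne
    obtain ⟨y, hy, -⟩ := mem_iUnion₂.1 (hcover hx)
    exact ⟨y, hy⟩
  obtain ⟨Y, rfl⟩ := hS.exists_eq_range hSne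
  have hYV : ∀ i, Y i ∈ V := fun i ↦ hSV (mem_range_self i)
  have hex : ∀ x, ∃ i, x ∈ N (Y i) ∪ Vᶜ := fun x ↦ by
    by_cases hx : x ∈ V
    · obtain ⟨_, ⟨i, rfl⟩, hi⟩ := mem_iUnion₂.1 (hcover hx)
      exact ⟨i, .inl hi⟩
    · exact ⟨0, .inr hx⟩
  classical
  refine ⟨Y, fun x ↦ Nat.find (hex x), measurable_find hex fun i ↦
    (hN _ (hYV i)).measurableSet.union hV.compl, hYV, fun x hx ↦ ?_⟩
  exact (Nat.find_spec (hex x)).resolve_right (not_not.2 hx)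

lemma exists_measurable_isTube [MeasurableSpace E] [BorelSpace E] [SecondCountableTopology E]
    (hU : IsOpen U) (hr₀ : 0 < r₀) (hball : ball x₀ r₀ ⊆ U) :
    ∃ (c : ℕ → E → E) (ρ : ℕ → E → ℝ), (∀ j, Measurable (c j)) ∧ (∀ j, Measurable (ρ j)) ∧
      ∀ x ∈ pathComponentIn U x₀, IsTube U x x₀ r₀ (c · x) (ρ · x) ∧
        ∑' j, edist (c j x) (c (j + 1) x) ≤ geoDist U x₀ x + 3 := by
  choose! r hr p s htube using fun y ↦ exists_isTube_of_mem_ball (y := y) hU hr₀ hball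
  obtain ⟨Y, k, hk, hY, hxY⟩ := exists_measurable_index (hU.pathComponentIn x₀).measurableSet
    ⟨x₀, mem_pathComponentIn_self (hball (mem_ball_self hr₀))⟩
    (fun y _ ↦ isOpen_ball (x := y) (ε := r y)) fun y hy ↦ mem_ball_self (hr y hy)
  refine ⟨fun j x ↦ seqCons x (p (Y (k x))) j, fun j x ↦ seqCons 0 (s (Y (k x))) j, ?_, ?_,
    fun x hx ↦ htube _ (hY _) x (hxY x hx)⟩
  · rintro (_ | j)
    · exact measurable_id
    · exact (measurable_from_nat (f := fun i ↦ p (Y i) j)).comp hk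
  · rintro (_ | j)
    · exact measurable_const
    · exact (measurable_from_nat (f := fun i ↦ s (Y i) j)).comp hk

end Tube

lemma ae_mem_of_lintegral_ne_top {X : Type*} [MeasurableSpace X] {μ : Measure X} {f : X → ℝ≥0∞}
    {V : Set X} (hV : MeasurableSet V) (hf : ∀ x ∉ V, f x = ⊤) (hint : ∫⁻ x, f x ∂μ ≠ ⊤) :
    ∀ᵐ x ∂μ, x ∈ V := by
  by_contra hpos
  refine hint (top_le_iff.1 ?_)
  calc
    ⊤ = ∫⁻ _ in Vᶜ, ⊤ ∂μ := by
      rw [setLIntegral_const, ENNReal.top_mul]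
      exact hpos
    _ = ∫⁻ x in Vᶜ, f x ∂μ := (setLIntegral_congr_fun hV.compl hf).symm
    _ ≤ ∫⁻ x, f x ∂μ := setLIntegral_le_lintegral _ _

section RandomTube

lemma map_prod_absolutelyContinuous {X Y Z : Type*} [MeasurableSpace X] [MeasurableSpace Y]
    [MeasurableSpace Z] {μ : Measure X} {B : Measure Y} [SFinite B] {ν : Measure Z} {f : X × Y → Z}
    (hf : Measurable f) (hslice : ∀ᵐ x ∂μ, B.map (fun b ↦ f (x, b)) ≪ ν) :
    (μ.prod B).map f ≪ ν := by
  refine .mk fun A hA hνA ↦ ?_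
  rw [Measure.map_apply hf hA, Measure.measure_prod_null (hf hA)]
  filter_upwards [hslice] with x hx
  have hfx : Measurable fun b ↦ f (x, b) := hf.comp measurable_prodMk_left
  have hnull := hx hνA
  rwa [Measure.map_apply hfx hA] at hnull

/-- The vertices of a random polyline sweeping out tubes with centers `c j x` and radii `ρ j x`:
the first component of `s = (x, b)` selects a tube and the second one a polyline in that tube. -/
def tubePolyline {X E : Type*} [AddCommGroup E] [Module ℝ E] (c : ℕ → X → E) (ρ : ℕ → X → ℝ)
    (j : ℕ) (s : X × E) : E :=
  c j s.1 + ρ j s.1 • s.2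

variable {E : Type*} [NormedAddCommGroup E] [NormedSpace ℝ E]

lemma edist_add_smul_add_smul_le {a a' b : E} {r r' : ℝ} (hb : b ∈ ball (0 : E) 1) :
    edist (a + r • b) (a' + r' • b) ≤ edist a a' + edist r r' := by
  have hb_le : ‖b‖ₑ ≤ 1 := by
    rw [← ofReal_norm, ENNReal.ofReal_le_one]
    exact (mem_ball_zero_iff.1 hb).le
  calc
    edist (a + r • b) (a' + r' • b) ≤ edist a a' + edist (r • b) (r' • b) := edist_add_add_le ..
    _ = edist a a' + edist r r' * ‖b‖ₑ := by
      rw [edist_eq_enorm_sub (r • b), ← sub_smul, enorm_smul, edist_eq_enorm_sub r]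
    _ ≤ edist a a' + edist r r' := by gcongr; exact mul_le_of_le_one_right' hb_le

variable {U : Set E} {x x₀ : E} {r₀ : ℝ}

lemma IsTube.tsum_edist_le {c : ℕ → E} {ρ : ℕ → ℝ} (h : IsTube U x x₀ r₀ c ρ) {b : E}
    (hb : b ∈ ball (0 : E) 1) :
    ∑' j, edist (c j + ρ j • b) (c (j + 1) + ρ (j + 1) • b) ≤
      ∑' j, edist (c j) (c (j + 1)) + ENNReal.ofReal r₀ := by
  calc
    ∑' j, edist (c j + ρ j • b) (c (j + 1) + ρ (j + 1) • b)
    _ ≤ ∑' j, (edist (c j) (c (j + 1)) + edist (ρ j) (ρ (j + 1))) :=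
      ENNReal.tsum_le_tsum fun j ↦ edist_add_smul_add_smul_le hb
    _ = ∑' j, edist (c j) (c (j + 1)) + ∑' j, edist (ρ j) (ρ (j + 1)) := ENNReal.tsum_add
    _ ≤ ∑' j, edist (c j) (c (j + 1)) + ENNReal.ofReal r₀ := by
      gcongr
      exact h.tsum_edist_radius_le

lemma IsTube.tendsto {c : ℕ → E} {ρ : ℕ → ℝ} (h : IsTube U x x₀ r₀ c ρ) (b : E) :
    Tendsto (fun j ↦ c j + ρ j • b) atTop (𝓝 (x₀ + r₀ • b)) :=
  tendsto_nhds_of_eventually_eq (h.eventually_eq.mono fun j hj ↦ by rw [hj.1, hj.2])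

variable [MeasurableSpace E] [BorelSpace E]

lemma measurable_tubePolyline [SecondCountableTopology E] {X : Type*} [MeasurableSpace X]
    {c : ℕ → X → E} {ρ : ℕ → X → ℝ} (hc : ∀ j, Measurable (c j)) (hρ : ∀ j, Measurable (ρ j))
    (j : ℕ) : Measurable (tubePolyline c ρ j) :=
  ((hc j).comp measurable_fst).add (((hρ j).comp measurable_fst).smul measurable_snd)

lemma map_add_smul_absolutelyContinuous [FiniteDimensional ℝ E] (ν : Measure E)
    [ν.IsAddHaarMeasure] (a : E) {r : ℝ} (hr : r ≠ 0) : ν.map (fun b ↦ a + r • b) ≪ ν := by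
  refine .mk fun A hA hνA ↦ ?_
  have hpre : (fun b ↦ a + r • b) ⁻¹' A = (r • ·) ⁻¹' ((a + ·) ⁻¹' A) := rfl
  rw [Measure.map_apply (by fun_prop) hA, hpre, Measure.addHaar_preimage_smul _ hr,
    measure_preimage_add, hνA, mul_zero]

lemma IsTube.map_lineMap_absolutelyContinuous [FiniteDimensional ℝ E] {ν B : Measure E}
    [ν.IsAddHaarMeasure] (hU : IsOpen U) (hB : B ≪ ν) (hBball : ∀ᵐ b ∂B, b ∈ ball (0 : E) 1)
    {c : ℕ → E} {ρ : ℕ → ℝ} (h : IsTube U x x₀ r₀ c ρ) (j : ℕ) {t : ℝ} (ht : t ∈ Ioc (0 : ℝ) 1) :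
    B.map (fun b ↦ lineMap (c j + ρ j • b) (c (j + 1) + ρ (j + 1) • b) t) ≪ ν.restrict U := by
  let a := lineMap (c j) (c (j + 1)) t
  let r := lineMap (ρ j) (ρ (j + 1)) t
  have hline : (fun b ↦ lineMap (c j + ρ j • b) (c (j + 1) + ρ (j + 1) • b) t) =
      fun b ↦ a + r • b := by
    ext b
    simp only [a, r, lineMap_apply_module]
    module
  have hr : r ≠ 0 := by
    have h0 : 0 ≤ ρ j := h.radius_zero ▸ h.radius_mono j.zero_le
    have h1 : 0 < ρ (j + 1) := h.radius_pos j
    simp only [r, lineMap_apply_module, smul_eq_mul]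
    nlinarith [mul_nonneg (sub_nonneg.2 ht.2) h0, mul_pos ht.1 h1]
  have hmemU : ∀ᵐ y ∂B.map (fun b ↦ a + r • b), y ∈ U := by
    refine (ae_map_iff (by fun_prop) hU.measurableSet).2 ?_
    filter_upwards [hBball] with b hb
    have hseg := h.segment_subset j b hb
    rw [segment_eq_image_lineMap] at hseg
    exact hseg ⟨t, Ioc_subset_Icc_self ht, congrFun hline b⟩
  rw [hline, ← Measure.restrict_eq_self_of_ae_mem hmemU]
  have hmap := (hB.map (by fun_prop : Measurable fun b ↦ a + r • b)).trans
    (map_add_smul_absolutelyContinuous ν a hr)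
  exact hmap.restrict U

variable {μ₀ B : Measure E} [IsFiniteMeasure μ₀] {c : ℕ → E → E} {ρ : ℕ → E → ℝ}

lemma lintegral_tsum_edist_tubePolyline_ne_top [SecondCountableTopology E]
    [IsProbabilityMeasure B] (hBball : ∀ᵐ b ∂B, b ∈ ball (0 : E) 1)
    (hc : ∀ j, Measurable (c j)) (hρ : ∀ j, Measurable (ρ j))
    (htube : ∀ᵐ x ∂μ₀, IsTube U x x₀ r₀ (c · x) (ρ · x))
    (hlen : ∫⁻ x, ∑' j, edist (c j x) (c (j + 1) x) ∂μ₀ ≠ ⊤) :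
    ∫⁻ s, ∑' j, edist (tubePolyline c ρ j s) (tubePolyline c ρ (j + 1) s) ∂(μ₀.prod B) ≠ ⊤ := by
  have hmeas : Measurable fun s ↦
      ∑' j, edist (tubePolyline c ρ j s) (tubePolyline c ρ (j + 1) s) :=
    .tsum fun j ↦ (measurable_tubePolyline hc hρ j).edist (measurable_tubePolyline hc hρ _)
  rw [lintegral_prod _ hmeas.aemeasurable, ← lt_top_iff_ne_top]
  calc
    ∫⁻ x, ∫⁻ b, ∑' j, edist (tubePolyline c ρ j (x, b)) (tubePolyline c ρ (j + 1) (x, b)) ∂B ∂μ₀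
    _ ≤ ∫⁻ x, (∑' j, edist (c j x) (c (j + 1) x) + ENNReal.ofReal r₀) ∂μ₀ := by
      refine lintegral_mono_ae (htube.mono fun x hx ↦ ?_)
      refine (lintegral_mono_ae (hBball.mono fun b hb ↦ hx.tsum_edist_le hb)).trans_eq ?_
      simp
    _ = ∫⁻ x, ∑' j, edist (c j x) (c (j + 1) x) ∂μ₀ + ENNReal.ofReal r₀ * μ₀ univ := by
      rw [lintegral_add_right _ measurable_const, lintegral_const]
    _ < ⊤ := ENNReal.add_lt_top.2
      ⟨hlen.lt_top, ENNReal.mul_lt_top ENNReal.ofReal_lt_top (measure_lt_top _ _)⟩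

end RandomTube

section Divergence

variable {E : Type*} [NormedAddCommGroup E] [InnerProductSpace ℝ E] [FiniteDimensional ℝ E]
  [MeasurableSpace E] [BorelSpace E] {U : Set E} {x₀ : E} {r₀ : ℝ} {μ₀ : Measure E}
  [IsFiniteMeasure μ₀]

lemma exists_measure_ac_ae_mem_ball (ν : Measure E) [ν.IsAddHaarMeasure] :
    ∃ B : Measure E, IsProbabilityMeasure B ∧ B ≪ ν ∧ ∀ᵐ b ∂B, b ∈ ball (0 : E) 1 :=
  ⟨ProbabilityTheory.cond ν (ball 0 1),
    ProbabilityTheory.cond_isProbabilityMeasure_of_finite (measure_ball_pos ν 0 one_pos).ne'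
      measure_ball_lt_top.ne,
    ProbabilityTheory.cond_absolutelyContinuous,
    ProbabilityTheory.ae_cond_mem measurableSet_ball⟩

lemma integral_mul_sub_prod_eq_neg {X Y : Type*} [MeasurableSpace X] [MeasurableSpace Y]
    {μ : Measure X} [SFinite μ] {B : Measure Y} [IsProbabilityMeasure B] {g f : X → ℝ} {h : Y → ℝ}
    (hg : Integrable g μ) (hg0 : ∫ x, g x ∂μ = 0) (hf : Integrable (fun x ↦ g x * f x) μ)
    (hh : Integrable h B) :
    ∫ s, g s.1 * (h s.2 - f s.1) ∂(μ.prod B) = -∫ x, g x * f x ∂μ := by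
  simp only [mul_sub]
  rw [integral_sub (hg.mul_prod hh) (hf.comp_fst B), integral_prod_mul, hg0, zero_mul, zero_sub,
    integral_fun_fst fun x ↦ g x * f x, probReal_univ, one_smul]

theorem exists_weight_of_isTube {c : ℕ → E → E} {ρ : ℕ → E → ℝ} (ν : Measure E)
    [ν.IsAddHaarMeasure] (hU : IsOpen U)
    (hc : ∀ j, Measurable (c j)) (hρ : ∀ j, Measurable (ρ j))
    (htube : ∀ᵐ x ∂μ₀, IsTube U x x₀ r₀ (c · x) (ρ · x))
    (hlen : ∫⁻ x, ∑' j, edist (c j x) (c (j + 1) x) ∂μ₀ ≠ ⊤) :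
    ∃ w : E → ℝ, Measurable w ∧ (∀ x, 0 < w x) ∧ IntegrableOn w U ν ∧
      ∀ (κ : ℝ) (g : E → ℝ), Measurable g → (∀ x, |g x| ≤ κ) → ∫ x, g x ∂μ₀ = 0 →
        ∃ u : E → E, Measurable u ∧ (∀ x, ‖u x‖ ≤ κ * w x) ∧
          ∀ φ : E → ℝ, ContDiff ℝ 1 φ → HasCompactSupport φ →
            ∫ x in U, ⟪u x, ∇ φ x⟫ ∂ν = -∫ x, g x * φ x ∂μ₀ := by
  obtain ⟨B, hBprob, hBν, hBball⟩ := exists_measure_ac_ae_mem_ball ν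
  have htube_prod : ∀ᵐ s ∂μ₀.prod B, IsTube U s.1 x₀ r₀ (c · s.1) (ρ · s.1) :=
    Measure.quasiMeasurePreserving_fst.ae htube
  have hmeas := measurable_tubePolyline hc hρ
  have hac : ∀ j, ∀ t ∈ Ioc (0 : ℝ) 1, (μ₀.prod B).map (fun s ↦
      lineMap (tubePolyline c ρ j s) (tubePolyline c ρ (j + 1) s) t) ≪ ν.restrict U := by
    refine fun j t ht ↦ map_prod_absolutelyContinuous ?_
      (htube.mono fun x hx ↦ hx.map_lineMap_absolutelyContinuous hU hBν hBball j ht)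
    simp only [lineMap_apply_module]
    exact ((hmeas j).const_smul _).add ((hmeas (j + 1)).const_smul _)
  obtain ⟨w, hw, hw_pos, hw_int, hfield⟩ := exists_weight_of_random_polyline hmeas
    (lintegral_tsum_edist_tubePolyline_ne_top hBball hc hρ htube hlen)
    (htube_prod.mono fun s hs ↦ hs.tendsto s.2) hac
  refine ⟨w, hw, hw_pos, hw_int, fun κ g hg hgκ hg0 ↦ ?_⟩
  obtain ⟨u, hu, huw, hu_div⟩ := hfield κ (fun s ↦ g s.1) (hg.comp measurable_fst) fun s ↦ hgκ s.1
  refine ⟨u, hu, huw, fun φ hφ hφc ↦ (hu_div φ hφ hφc).trans ?_⟩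
  -- The law of the terminal vertex `x₀ + r₀ • b` does not depend on the starting point `x`, so the
  -- terminal vertices contribute nothing because `g` has mean zero.
  obtain ⟨M, hM⟩ := hφc.exists_bound_of_continuous hφ.continuous
  have hg_int : Integrable g μ₀ := .of_bound hg.aestronglyMeasurable κ (ae_of_all _ hgκ)
  have hφ_end : Integrable (fun b ↦ φ (x₀ + r₀ • b)) B :=
    .of_bound (by have := hφ.continuous; fun_prop) M (ae_of_all _ fun b ↦ hM _)
  rw [← integral_mul_sub_prod_eq_neg hg_int hg0
    (hg_int.mul_bdd hφ.continuous.aestronglyMeasurable (ae_of_all _ hM)) hφ_end]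
  refine integral_congr_ae (htube_prod.mono fun s hs ↦ ?_)
  simp only [tubePolyline, hs.center_zero, hs.radius_zero, zero_smul, add_zero]

theorem exists_weight_of_lintegral_geoDist_ne_top (ν : Measure E) [ν.IsAddHaarMeasure]
    (hU : IsOpen U) (hx₀ : x₀ ∈ U) (hgeo : ∫⁻ x, geoDist U x₀ x ∂μ₀ ≠ ⊤) :
    ∃ w : E → ℝ, Measurable w ∧ (∀ x, 0 < w x) ∧ IntegrableOn w U ν ∧
      ∀ (κ : ℝ) (g : E → ℝ), Measurable g → (∀ x, |g x| ≤ κ) → ∫ x, g x ∂μ₀ = 0 →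
        ∃ u : E → E, Measurable u ∧ (∀ x, ‖u x‖ ≤ κ * w x) ∧
          ∀ φ : E → ℝ, ContDiff ℝ 1 φ → HasCompactSupport φ →
            ∫ x in U, ⟪u x, ∇ φ x⟫ ∂ν = -∫ x, g x * φ x ∂μ₀ := by
  obtain ⟨r₀, hr₀, hball⟩ := Metric.isOpen_iff.1 hU x₀ hx₀
  obtain ⟨c, ρ, hc, hρ, htube⟩ := exists_measurable_isTube hU hr₀ hball
  have hmem : ∀ᵐ x ∂μ₀, x ∈ pathComponentIn U x₀ :=
    ae_mem_of_lintegral_ne_top (hU.pathComponentIn x₀).measurableSet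
      (fun x hx ↦ geoDist_eq_top hx) hgeo
  refine exists_weight_of_isTube ν hU hc hρ (hmem.mono fun x hx ↦ (htube x hx).1) ?_
  refine ne_top_of_le_ne_top ?_ (lintegral_mono_ae (hmem.mono fun x hx ↦ (htube x hx).2))
  rw [lintegral_add_right _ measurable_const, lintegral_const]
  finiteness

end Divergence

section SignedMeasure

lemma exists_density_of_le_smul {X : Type*} [MeasurableSpace X] {μ Q : Measure X} [SigmaFinite μ]
    [SigmaFinite Q] {κ : ℝ} (hκ : 0 ≤ κ) (hQ : Q ≤ ENNReal.ofReal κ • μ) :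
    ∃ f : X → ℝ, Measurable f ∧ (∀ x, f x ∈ Icc 0 κ) ∧
      ∀ φ : X → ℝ, ∫ x, f x * φ x ∂μ = ∫ x, φ x ∂Q := by
  have hac : Q ≪ μ := Measure.absolutelyContinuous_of_le_smul hQ
  have hrn : ∀ᵐ x ∂μ, Q.rnDeriv μ x ≤ ENNReal.ofReal κ := by
    refine ae_le_of_forall_setLIntegral_le_of_sigmaFinite (Q.measurable_rnDeriv μ) fun s _ _ ↦ ?_
    rw [setLIntegral_const]
    exact (Measure.setLIntegral_rnDeriv_le s).trans (hQ s)
  refine ⟨fun x ↦ (min (Q.rnDeriv μ x) (ENNReal.ofReal κ)).toReal,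
    ((Q.measurable_rnDeriv μ).min measurable_const).ennreal_toReal,
    fun x ↦ ⟨ENNReal.toReal_nonneg, ENNReal.toReal_le_of_le_ofReal hκ (min_le_right _ _)⟩,
    fun φ ↦ ?_⟩
  rw [← integral_toReal_rnDeriv_mul hac]
  refine integral_congr_ae (hrn.mono fun x hx ↦ ?_)
  simp only [min_eq_left hx]

lemma apply_eq_integral_sub_integral {X : Type*} [MeasurableSpace X] (μ : SignedMeasure X)
    {s : Set X} (hs : MeasurableSet s) :
    μ s = ∫ _ in s, (1 : ℝ) ∂μ.toJordanDecomposition.posPart -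
      ∫ _ in s, (1 : ℝ) ∂μ.toJordanDecomposition.negPart := by
  conv_lhs => rw [← μ.toSignedMeasure_toJordanDecomposition]
  rw [JordanDecomposition.toSignedMeasure, _root_.sub_apply,
    Measure.toSignedMeasure_apply_measurable hs, Measure.toSignedMeasure_apply_measurable hs]
  simp

lemma exists_density_signedIntegral_eq {n : ℕ} {Ω : Set (En n)} {μ0 : Measure (En n)}
    [IsFiniteMeasure μ0] (hsupp : μ0 Ωᶜ = 0) {κ : ℝ} (hκ : 0 ≤ κ) {μ : SignedMeasure (En n)}
    (hle : μ.totalVariation ≤ ENNReal.ofReal κ • μ0) :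
    ∃ g : En n → ℝ, Measurable g ∧ (∀ x, |g x| ≤ κ) ∧
      ∀ φ : En n → ℝ, Integrable φ μ0 → ∫ x, g x * φ x ∂μ0 = signedIntegral μ Ω φ := by
  let pos := μ.toJordanDecomposition.posPart
  let neg := μ.toJordanDecomposition.negPart
  have hpos : pos ≤ ENNReal.ofReal κ • μ0 := (Measure.le_add_right le_rfl).trans hle
  have hneg : neg ≤ ENNReal.ofReal κ • μ0 := (Measure.le_add_left le_rfl).trans hle
  have hrestrict : ∀ Q : Measure (En n), Q ≤ ENNReal.ofReal κ • μ0 → Q.restrict Ω = Q :=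
    fun Q hQ ↦ Measure.restrict_eq_self_of_ae_mem (Measure.absolutelyContinuous_of_le_smul hQ hsupp)
  obtain ⟨f, hf, hfκ, hf_int⟩ := exists_density_of_le_smul hκ hpos
  obtain ⟨h, hh, hhκ, hh_int⟩ := exists_density_of_le_smul hκ hneg
  refine ⟨fun x ↦ f x - h x, hf.sub hh, fun x ↦
    abs_sub_le_of_nonneg_of_le (hfκ x).1 (hfκ x).2 (hhκ x).1 (hhκ x).2, fun φ hφ ↦ ?_⟩
  have hmul : ∀ f : En n → ℝ, Measurable f → (∀ x, f x ∈ Icc 0 κ) →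
      Integrable (fun x ↦ f x * φ x) μ0 := fun f hf hfκ ↦
    hφ.bdd_mul hf.aestronglyMeasurable (c := κ) <| ae_of_all _ fun x ↦ by
      rw [Real.norm_of_nonneg (hfκ x).1]
      exact (hfκ x).2
  simp only [sub_mul]
  rw [integral_sub (hmul f hf hfκ) (hmul h hh hhκ), hf_int, hh_int, signedIntegral,
    hrestrict pos hpos, hrestrict neg hneg]

end SignedMeasure

section MeasurableCover

variable {n : ℕ} {Ω Ot : Set (En n)}

lemma nonempty_compl_of_volume_sdiff_eq_zero (hn : 1 ≤ n) (hΩ : Bornology.IsBounded Ω)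
    (hnull : volume (Ot \ Ω) = 0) : Otᶜ.Nonempty := by
  have : Nonempty (Fin n) := ⟨⟨0, hn⟩⟩
  rw [nonempty_compl]
  rintro rfl
  refine (hΩ.measure_lt_top (μ := volume)).ne ?_
  rw [measure_eq_measure_of_null_sdiff (subset_univ Ω) hnull, measure_univ_of_isAddLeftInvariant]

lemma hatSet_eq_interior (hOt : Otᶜ.Nonempty) : hatSet Ot = interior Ot := by
  ext x
  rw [hatSet, mem_ofPred_eq, ← infDist_pos_iff_notMem_closure hOt, closure_compl, mem_compl_iff,
    not_not, and_iff_right_of_imp fun hx ↦ interior_subset hx]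

lemma isOpen_hatSet_and_subset_and_volume_sdiff (hn : 1 ≤ n) (hΩopen : IsOpen Ω)
    (hΩ : Bornology.IsBounded Ω) (hcov : Ω ⊆ Ot) (hnull : volume (Ot \ Ω) = 0) :
    IsOpen (hatSet Ot) ∧ Ω ⊆ hatSet Ot ∧ volume (hatSet Ot \ Ω) = 0 := by
  rw [hatSet_eq_interior (nonempty_compl_of_volume_sdiff_eq_zero hn hΩ hnull)]
  exact ⟨isOpen_interior, interior_maximal hcov hΩopen,
    measure_mono_null (sdiff_subset_sdiff_left interior_subset) hnull⟩

end MeasurableCover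

theorem stmt_0_general {n : ℕ} {Ω U : Set (En n)} (hΩ : MeasurableSet Ω) (hU : IsOpen U)
    (hΩU : Ω ⊆ U) (hnull : volume (U \ Ω) = 0) {x0 : En n} (hx0 : x0 ∈ U) (μ0 : Measure (En n))
    [IsFiniteMeasure μ0] (hsupp : μ0 Ωᶜ = 0) (hgeo : ∫⁻ x in Ω, geoDist U x0 x ∂μ0 < ⊤) :
    ∃ w0 : En n → ℝ, Measurable w0 ∧ IntegrableOn w0 Ω ∧ (∀ x, 0 < w0 x) ∧
      ∀ κ : ℝ, 0 ≤ κ → ∀ μ : SignedMeasure (En n), μ Ω = 0 →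
        μ.totalVariation ≤ ENNReal.ofReal κ • μ0 →
        ∃ u : En n → En n, Measurable u ∧ (∀ x, ‖u x‖ ≤ κ * w0 x) ∧
          ∀ φ : En n → ℝ, ContDiff ℝ 1 φ → HasCompactSupport φ →
            ∫ x in Ω, ⟪u x, ∇ φ x⟫ = -signedIntegral μ Ω φ := by
  have hμ0 : μ0.restrict Ω = μ0 := Measure.restrict_eq_self_of_ae_mem hsupp
  have hvol : volume.restrict U = volume.restrict Ω :=
    Measure.restrict_congr_set (ae_eq_set.2 ⟨hnull, by simp [sdiff_eq_empty.2 hΩU]⟩)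
  rw [hμ0] at hgeo
  obtain ⟨w, hw, hw_pos, hw_int, hfield⟩ :=
    exists_weight_of_lintegral_geoDist_ne_top volume hU hx0 hgeo.ne
  refine ⟨w, hw, hw_int.mono_set hΩU, hw_pos, fun κ hκ μ hμ hle ↦ ?_⟩
  obtain ⟨g, hg, hgκ, hg_int⟩ := exists_density_signedIntegral_eq hsupp hκ hle
  have hg_zero : ∫ x, g x ∂μ0 = 0 := by
    simpa [signedIntegral, ← hμ, apply_eq_integral_sub_integral μ hΩ] using
      hg_int (fun _ ↦ 1) (integrable_const 1)
  obtain ⟨u, hu, huw, hu_div⟩ := hfield κ g hg hgκ hg_zero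
  refine ⟨u, hu, huw, fun φ hφ hφc ↦ ?_⟩
  rw [← hvol, hu_div φ hφ hφc, hg_int φ (hφ.continuous.integrable_of_hasCompactSupport hφc)]

/-- For a bounded domain `Ω ⊆ ℝⁿ` (with a fixed measurable cover `Ω̃`
and associated `Ω̂`, and base point `x0 ∈ Ω`), there is a constant `C > 0` such that for
every nontrivial finite positive Radon measure `μ0` on `Ω` with `d_Ω̂ ∈ L¹(μ0)` one can
find a weight `w0 ∈ L¹(Ω)`, positive a.e. on `Ω`, such that for every `κ > 0` and every
finite signed Radon measure `μ` on `Ω` with `μ(Ω) = 0` and `|μ| ≤ κ μ0` there is a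
measurable vector field `u` with `|u| ≤ C κ w0` a.e. on `Ω` solving
`∫_Ω u·∇φ = −∫_Ω φ dμ` for all compactly supported smooth `φ`. -/
theorem stmt_0 (n : ℕ) (hn : 1 ≤ n) (Ω Ot : Set (En n))
    (hΩopen : IsOpen Ω) (hΩconn : IsConnected Ω) (hΩbdd : Bornology.IsBounded Ω)
    (hcov : Ω ⊆ Ot) (hcovnull : volume (Ot \ Ω) = 0)
    (x0 : En n) (hx0 : x0 ∈ Ω) :
    ∃ C : ℝ, 0 < C ∧
      ∀ μ0 : Measure (En n), IsFiniteMeasure μ0 → μ0 ≠ 0 → μ0 Ωᶜ = 0 →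
        (∫⁻ x in Ω, geoDist (hatSet Ot) x0 x ∂μ0) < ⊤ →
        ∃ w0 : En n → ℝ, Measurable w0 ∧
          IntegrableOn w0 Ω volume ∧
          (∀ᵐ x ∂volume.restrict Ω, 0 < w0 x) ∧
          ∀ κ : ℝ, 0 < κ →
            ∀ μ : MeasureTheory.SignedMeasure (En n),
              μ Ω = 0 → μ.totalVariation ≤ ENNReal.ofReal κ • μ0 →
              ∃ u : En n → En n, Measurable u ∧
                (∀ᵐ x ∂volume.restrict Ω, ‖u x‖ ≤ C * κ * w0 x) ∧
                ∀ φ : En n → ℝ, ContDiff ℝ (⊤ : ℕ∞) φ → HasCompactSupport φ →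
                  ∫ x in Ω, ⟪u x, gradient φ x⟫ = - signedIntegral μ Ω φ := by
  obtain ⟨hopen, hΩhat, hnull⟩ :=
    isOpen_hatSet_and_subset_and_volume_sdiff hn hΩopen hΩbdd hcov hcovnull
  refine ⟨1, one_pos, fun μ0 _ _ hsupp hgeo ↦ ?_⟩
  obtain ⟨w, hw, hw_int, hw_pos, hfield⟩ :=
    stmt_0_general hΩopen.measurableSet hopen hΩhat hnull (hΩhat hx0) μ0 hsupp hgeo
  refine ⟨w, hw, hw_int, ae_of_all _ hw_pos, fun κ hκ μ hμ hle ↦ ?_⟩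
  obtain ⟨u, hu, huw, hu_div⟩ := hfield κ hκ.le μ hμ hle
  exact ⟨u, hu, ae_of_all _ fun x ↦ by simpa using huw x,
    fun φ hφ hφc ↦ hu_div φ (hφ.of_le (mod_cast le_top)) hφc⟩
end
end

section
/- Let Ω ⊂ ℝⁿ be a bounded domain, Ω̂ as below, and x0 ∈ Ω. For every y ∈ Ω̂ there exists a rectifiable curve γ_y : [0,1] → Ω̂ such that, writing γ(t,y) := γ_y(t): (a) γ(0,y) = y and γ(1,y) = x0 for all y ∈ Ω̂; (b) the map (t,y) ↦ γ(t,y) is measurable; (c) there is a constant C > 0 such that for all x, y ∈ Ω and all r ≤ d̂(x)/2 one has l(γ_y ∩ B(x,r)) ≤ C r, and l(γ_y) ≤ C d_Ω̂(y) for all y; (d) for every sufficiently small ε > 0 there exists δ > 0 such that γ_y ⊂ Ω̂_δ for every y ∈ Ω̂_ε. -/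
open MeasureTheory Metric Set
open scoped RealInnerProductSpace ENNReal NNReal

noncomputable section

/-!
Let `d` be the distance to the complement of `U = Ω̂`. Take a Whitney net `Z` of `U`: its mesh near
`z` is comparable to `d z`. Join two net points when they are close relative to `d`; then the edges
are segments well inside `U`. The curve `γ_y` runs straight from `y` to a nearby net point, and from
there to `x0` along a *simple* path in this graph.

* Since only boundedly many net points are within `d x` of `x` (packing), and a simple path visits
  each of them at most once, only boundedly many segments of `γ_y` meet `B(x,r)`, `r ≤ d x / 2`.
  Each contributes at most the diameter of the ball.
* Cutting an almost shortest curve into pieces of size comparable to `d` and moving the cut points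
  into `Z` yields a path in the graph of comparable length; erasing its loops keeps the bound.
* `Z` is countable, so `y` can be assigned a net point measurably.
* Only finitely many net points lie in `{d > ε / 2}`, so the paths starting at them cover a compact
  subset of `U`.
-/

section Variation

theorem eVariationOn_const {α X : Type*} [LinearOrder α] [PseudoEMetricSpace X] (x : X)
    (s : Set α) : eVariationOn (fun _ => x) s = 0 :=
  eVariationOn.constant_on (by rintro _ ⟨_, _, rfl⟩ _ ⟨_, _, rfl⟩; rfl)

theorem eVariationOn_union_le {α X : Type*} [LinearOrder α] [PseudoEMetricSpace X] (f : α → X)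
    {s t : Set α} (hst : ∀ x ∈ s, ∀ y ∈ t, x ≤ y) :
    eVariationOn f (s ∪ t) ≤ eVariationOn f s + ediam (f '' (s ∪ t)) + eVariationOn f t := by
  refine iSup_le fun ⟨n, u, hu, hus⟩ => ?_
  set F := u '' Iic n with hF
  have hFfin : F.Finite := (finite_Iic n).image u
  have hFsplit : F = (F ∩ s) ∪ (F ∩ t) := by
    rw [← inter_union_distrib_left, eq_comm, inter_eq_left]
    exact image_subset_iff.2 fun i _ => hus i
  have hFs : eVariationOn f (F ∩ s) ≤ eVariationOn f s := eVariationOn.mono f inter_subset_right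
  have hFt : eVariationOn f (F ∩ t) ≤ eVariationOn f t := eVariationOn.mono f inter_subset_right
  calc ∑ i ∈ Finset.range n, edist (f (u (i + 1))) (f (u i))
      = eVariationOn f F := by
        simp only [hF, eVariationOn.image_range_of_monotone f hu, edist_comm]
    _ ≤ eVariationOn f s + ediam (f '' (s ∪ t)) + eVariationOn f t := by
        rcases (F ∩ s).eq_empty_or_nonempty with hs | hs
        · rw [hFsplit, hs, empty_union]
          exact hFt.trans le_add_self
        rcases (F ∩ t).eq_empty_or_nonempty with ht | ht
        · rw [hFsplit, ht, union_empty, add_assoc]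
          exact hFs.trans le_self_add
        obtain ⟨x, hx, hmax⟩ := exists_max_image (F ∩ s) id (hFfin.inter_of_left s) hs
        obtain ⟨y, hy, hmin⟩ := exists_min_image (F ∩ t) id (hFfin.inter_of_left t) ht
        rw [hFsplit, eVariationOn.union' f ⟨hx, hmax⟩ ⟨hy, hmin⟩ (hst x hx.2 y hy.2)]
        gcongr
        exact edist_le_ediam_of_mem (mem_image_of_mem f (Or.inl hx.2))
          (mem_image_of_mem f (Or.inr hy.2))

variable {E : Type*} [NormedAddCommGroup E] [NormedSpace ℝ E]

theorem eVariationOn_lineMap_inter_Icc_le (a b : E) (S : Set ℝ) (s t : ℝ) :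
    eVariationOn (AffineMap.lineMap a b) (S ∩ Icc s t) ≤
      edist (AffineMap.lineMap a b s : E) (AffineMap.lineMap a b t) := by
  have hlip : LipschitzOnWith (nndist a b) (AffineMap.lineMap a b) (univ : Set ℝ) :=
    (lipschitzWith_lineMap a b).lipschitzOnWith
  calc eVariationOn (AffineMap.lineMap a b ∘ id) (S ∩ Icc s t)
      ≤ nndist a b * eVariationOn id (S ∩ Icc s t) := hlip.comp_eVariationOn_le (mapsTo_univ _ _)
    _ ≤ nndist a b * ENNReal.ofReal (t - s) := by
        gcongr
        exact (eVariationOn.mono _ inter_subset_right).trans_eq (eVariationOn_id_Icc s t)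
    _ ≤ nndist a b * ENNReal.ofReal (dist s t) := by
        gcongr
        rw [dist_comm]
        exact le_abs_self _
    _ = edist (AffineMap.lineMap a b s : E) (AffineMap.lineMap a b t) := by
        rw [edist_dist, dist_lineMap_lineMap, ENNReal.ofReal_mul dist_nonneg, mul_comm,
          ← edist_dist, ← edist_dist, edist_nndist a b]

theorem eVariationOn_lineMap_le_ediam (a b : E) (S : Set ℝ) :
    eVariationOn (AffineMap.lineMap a b) S ≤ ediam ((AffineMap.lineMap a b : ℝ → E) '' S) := by
  rw [eVariationOn.eq_biSup_inter_Icc]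
  exact iSup₂_le fun p hp => (eVariationOn_lineMap_inter_Icc_le a b S p.1 p.2).trans <|
    edist_le_ediam_of_mem (mem_image_of_mem _ hp.1) (mem_image_of_mem _ hp.2.1)

theorem eVariationOn_lineMap_Icc_le (a b : E) :
    eVariationOn (AffineMap.lineMap a b) (Icc (0 : ℝ) 1) ≤ edist a b := by
  simpa using eVariationOn_lineMap_inter_Icc_le a b univ 0 1

end Variation

section Curves

variable {X : Type*}

/-- The concatenation of two curves parametrised by `[0,1]`, each run at double speed. -/
def curveConcat (f g : ℝ → X) (t : ℝ) : X :=
  if t ≤ 1 / 2 then f (2 * t) else g (2 * t - 1)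

theorem eqOn_curveConcat_left (f g : ℝ → X) :
    EqOn (curveConcat f g) (f ∘ (2 * ·)) (Iic (1 / 2)) := fun _ ht => if_pos ht

theorem eqOn_curveConcat_right {f g : ℝ → X} (hfg : f 1 = g 0) :
    EqOn (curveConcat f g) (g ∘ (2 * · - 1)) (Ici (1 / 2)) := by
  intro t ht
  rcases eq_or_lt_of_le (mem_Ici.1 ht) with rfl | hlt
  · simpa [curveConcat] using hfg
  · exact if_neg hlt.not_ge

theorem measurable_curveConcat {α : Type*} [MeasurableSpace α] [MeasurableSpace X]
    {f g : α → ℝ → X} {τ : α → ℝ} (hτ : Measurable τ) (hf : Measurable fun a => f a (2 * τ a))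
    (hg : Measurable fun a => g a (2 * τ a - 1)) :
    Measurable fun a => curveConcat (f a) (g a) (τ a) :=
  Measurable.ite (measurableSet_le hτ measurable_const) hf hg

variable [PseudoEMetricSpace X]

/-- The curve `γ : [0,1] → U` runs from `x` to `y`. As in `geoDist`, a curve is a function on all
of `ℝ` of which only the restriction to `[0,1]` matters. -/
structure IsCurveIn (U : Set X) (x y : X) (γ : ℝ → X) : Prop where
  continuousOn : ContinuousOn γ (Icc 0 1)
  mapsTo : MapsTo γ (Icc 0 1) U
  source : γ 0 = x
  target : γ 1 = y

/-- The length `l(γ ∩ B)` of the portion of the curve `γ : [0,1] → X` lying in `B`. -/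
def lengthIn (γ : ℝ → X) (B : Set X) : ℝ≥0∞ :=
  eVariationOn γ {t ∈ Icc (0 : ℝ) 1 | γ t ∈ B}

variable {U B : Set X} {x y z x0 : X} {f g γ : ℝ → X} {S T : Set ℝ}

theorem mapsTo_two_mul_Icc : MapsTo (2 * · : ℝ → ℝ) (Icc 0 (1 / 2)) (Icc 0 1) :=
  fun _ ht => ⟨by linarith [ht.1], by linarith [ht.2]⟩

theorem mapsTo_two_mul_sub_one_Icc : MapsTo (2 * · - 1 : ℝ → ℝ) (Icc (1 / 2) 1) (Icc 0 1) :=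
  fun _ ht => ⟨by linarith [ht.1], by linarith [ht.2]⟩

theorem IsCurveIn.concat (hf : IsCurveIn U x y f) (hg : IsCurveIn U y z g) :
    IsCurveIn U x z (curveConcat f g) := by
  have hfg : f 1 = g 0 := hf.target.trans hg.source.symm
  have hleft : EqOn (curveConcat f g) (f ∘ (2 * ·)) (Icc 0 (1 / 2)) :=
    (eqOn_curveConcat_left f g).mono Icc_subset_Iic_self
  have hright : EqOn (curveConcat f g) (g ∘ (2 * · - 1)) (Icc (1 / 2) 1) :=
    (eqOn_curveConcat_right hfg).mono Icc_subset_Ici_self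
  have hIcc : Icc (0 : ℝ) (1 / 2) ∪ Icc (1 / 2) 1 = Icc 0 1 :=
    Icc_union_Icc_eq_Icc (by norm_num) (by norm_num)
  refine ⟨?_, ?_, ?_, ?_⟩
  · rw [← hIcc]
    exact ((hf.continuousOn.comp (by fun_prop) mapsTo_two_mul_Icc).congr hleft).union_of_isClosed
      ((hg.continuousOn.comp (by fun_prop) mapsTo_two_mul_sub_one_Icc).congr hright)
      isClosed_Icc isClosed_Icc
  · rw [← hIcc]
    exact ((hf.mapsTo.comp mapsTo_two_mul_Icc).congr hleft.symm).union
      ((hg.mapsTo.comp mapsTo_two_mul_sub_one_Icc).congr hright.symm)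
  · simpa [curveConcat] using hf.source
  · rw [← hg.target]
    norm_num [curveConcat]

theorem eVariationOn_curveConcat_left_le (hS : S ⊆ Iic (1 / 2)) (hST : MapsTo (2 * ·) S T) :
    eVariationOn (curveConcat f g) S ≤ eVariationOn f T := by
  rw [eVariationOn.congr ((eqOn_curveConcat_left f g).mono hS)]
  exact eVariationOn.comp_le_of_monotoneOn f _ (fun _ _ _ _ h => by gcongr) hST

theorem eVariationOn_curveConcat_right_le (hfg : f 1 = g 0) (hS : S ⊆ Ici (1 / 2))
    (hST : MapsTo (2 * · - 1) S T) : eVariationOn (curveConcat f g) S ≤ eVariationOn g T := by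
  rw [eVariationOn.congr ((eqOn_curveConcat_right hfg).mono hS)]
  exact eVariationOn.comp_le_of_monotoneOn g _ (fun _ _ _ _ h => by gcongr) hST

theorem eVariationOn_curveConcat_le (hfg : f 1 = g 0) :
    eVariationOn (curveConcat f g) (Icc 0 1) ≤
      eVariationOn f (Icc 0 1) + eVariationOn g (Icc 0 1) := by
  have hsplit := eVariationOn.Icc_add_Icc (curveConcat f g) (s := univ) (a := 0) (b := 1 / 2)
    (c := 1) (by norm_num) (by norm_num) (mem_univ _)
  simp only [univ_inter] at hsplit
  rw [← hsplit]
  exact add_le_add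
    (eVariationOn_curveConcat_left_le Icc_subset_Iic_self mapsTo_two_mul_Icc)
    (eVariationOn_curveConcat_right_le hfg Icc_subset_Ici_self mapsTo_two_mul_sub_one_Icc)

theorem eVariationOn_curveConcat_right_le_lengthIn (hfg : f 1 = g 0) (B : Set X) :
    eVariationOn (curveConcat f g) {t ∈ Icc (1 / 2 : ℝ) 1 | curveConcat f g t ∈ B} ≤
      lengthIn g B := by
  refine eVariationOn_curveConcat_right_le hfg (fun t ht => ht.1.1) fun t ht => ?_
  refine ⟨mapsTo_two_mul_sub_one_Icc ht.1, ?_⟩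
  simpa only [eqOn_curveConcat_right hfg ht.1.1, Function.comp_apply] using ht.2

-- The term `ediam B` pays for the jump from the last point of `f` in `B` to the first one of `g`.
theorem lengthIn_curveConcat_le (hfg : f 1 = g 0) (B : Set X) :
    lengthIn (curveConcat f g) B ≤ lengthIn f B + ediam B + lengthIn g B := by
  set P := {t ∈ Icc (0 : ℝ) (1 / 2) | curveConcat f g t ∈ B}
  set Q := {t ∈ Icc (1 / 2 : ℝ) 1 | curveConcat f g t ∈ B}
  have hPQ : {t ∈ Icc (0 : ℝ) 1 | curveConcat f g t ∈ B} = P ∪ Q := by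
    rw [← Icc_union_Icc_eq_Icc (b := 1 / 2) (by norm_num) (by norm_num)]
    exact sep_union
  have hPf : eVariationOn (curveConcat f g) P ≤ lengthIn f B := by
    refine eVariationOn_curveConcat_left_le (fun t ht => ht.1.2) fun t ht => ?_
    refine ⟨mapsTo_two_mul_Icc ht.1, ?_⟩
    simpa only [eqOn_curveConcat_left f g ht.1.2, Function.comp_apply] using ht.2
  have hdiam : ediam (curveConcat f g '' (P ∪ Q)) ≤ ediam B :=
    ediam_mono (image_subset_iff.2 (union_subset (fun _ ht => ht.2) fun _ ht => ht.2))
  calc lengthIn (curveConcat f g) B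
      = eVariationOn (curveConcat f g) (P ∪ Q) := by rw [lengthIn, hPQ]
    _ ≤ _ := eVariationOn_union_le _ fun s hs t ht => hs.1.2.trans ht.1.1
    _ ≤ _ := add_le_add (add_le_add hPf hdiam) (eVariationOn_curveConcat_right_le_lengthIn hfg B)

theorem lengthIn_curveConcat_le_right (hfg : f 1 = g 0) (hf : MapsTo f (Icc 0 1) Bᶜ) :
    lengthIn (curveConcat f g) B ≤ lengthIn g B := by
  refine (eVariationOn.mono _ ?_).trans (eVariationOn_curveConcat_right_le_lengthIn hfg B)
  rintro t ⟨ht, htB⟩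
  refine ⟨⟨?_, ht.2⟩, htB⟩
  by_contra! hlt
  rw [eqOn_curveConcat_left f g hlt.le] at htB
  exact hf (mapsTo_two_mul_Icc ⟨ht.1, hlt.le⟩) htB

theorem exists_isCurveIn_of_isPathConnected (hU : IsPathConnected U) (hx : x ∈ U) (hy : y ∈ U) :
    ∃ γ, IsCurveIn U x y γ := by
  obtain ⟨γ, hγ⟩ := hU.joinedIn x hx y hy
  exact ⟨γ.extend, γ.continuous_extend.continuousOn, fun t ht => γ.extend_apply ht ▸ hγ _,
    γ.extend_zero, γ.extend_one⟩

theorem IsCurveIn.geoDist_le (hγ : IsCurveIn U x x0 γ) :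
    geoDist U x0 x ≤ eVariationOn γ (Icc 0 1) :=
  iInf_le_of_le γ <| iInf_le_of_le hγ.continuousOn <| iInf_le_of_le hγ.mapsTo <|
    iInf_le_of_le hγ.source <| iInf_le_of_le hγ.target le_rfl

theorem le_geoDist {c : ℝ≥0∞} (h : ∀ γ, IsCurveIn U x x0 γ → c ≤ eVariationOn γ (Icc 0 1)) :
    c ≤ geoDist U x0 x :=
  le_iInf fun γ => le_iInf fun hcont => le_iInf fun hmaps => le_iInf fun h0 => le_iInf fun h1 =>
    h γ ⟨hcont, hmaps, h0, h1⟩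

theorem edist_le_geoDist (U : Set X) (x0 x : X) : edist x x0 ≤ geoDist U x0 x := by
  refine le_geoDist fun γ hγ => ?_
  rw [← hγ.source, ← hγ.target]
  exact eVariationOn.edist_le γ (left_mem_Icc.2 zero_le_one) (right_mem_Icc.2 zero_le_one)

theorem exists_isCurveIn_eVariationOn_le_two_mul_geoDist (hx : geoDist U x0 x ≠ 0)
    (hγ : IsCurveIn U x x0 γ) :
    ∃ σ, IsCurveIn U x x0 σ ∧ eVariationOn σ (Icc 0 1) ≤ 2 * geoDist U x0 x := by
  by_contra! h
  have hle : 2 * geoDist U x0 x ≤ geoDist U x0 x := le_geoDist fun σ hσ => (h σ hσ).le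
  have htop : geoDist U x0 x ≠ ⊤ := fun htop => by simpa [htop] using h γ hγ
  rw [two_mul] at hle
  exact (ENNReal.lt_add_right htop hx).not_ge hle

variable {E : Type*} [NormedAddCommGroup E] [NormedSpace ℝ E]

theorem mapsTo_lineMap_segment (a b : E) :
    MapsTo (AffineMap.lineMap a b : ℝ → E) (Icc 0 1) (segment ℝ a b) := by
  rw [segment_eq_image_lineMap]
  exact mapsTo_image _ _

theorem isCurveIn_lineMap {U : Set E} {a b : E} (h : segment ℝ a b ⊆ U) :
    IsCurveIn U a b (AffineMap.lineMap a b) where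
  continuousOn := AffineMap.lineMap_continuous.continuousOn
  mapsTo := (mapsTo_lineMap_segment a b).mono_right h
  source := AffineMap.lineMap_apply_zero a b
  target := AffineMap.lineMap_apply_one a b

theorem lengthIn_lineMap_le (a b : E) (B : Set E) :
    lengthIn (AffineMap.lineMap a b) B ≤ ediam B :=
  (eVariationOn_lineMap_le_ediam a b _).trans (ediam_mono (image_subset_iff.2 fun _ ht => ht.2))

theorem geoDist_le_edist_add_geoDist {U : Set E} {x0 y z : E} (h : segment ℝ z y ⊆ U) :
    geoDist U x0 z ≤ edist z y + geoDist U x0 y := by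
  rw [← tsub_le_iff_left]
  refine le_geoDist fun σ hσ => tsub_le_iff_left.2 ?_
  have hseg := isCurveIn_lineMap h
  calc geoDist U x0 z
      ≤ eVariationOn (curveConcat (AffineMap.lineMap z y) σ) (Icc 0 1) :=
        (hseg.concat hσ).geoDist_le
    _ ≤ eVariationOn (AffineMap.lineMap z y) (Icc (0 : ℝ) 1) + eVariationOn σ (Icc 0 1) :=
        eVariationOn_curveConcat_le (hseg.target.trans hσ.source.symm)
    _ ≤ edist z y + eVariationOn σ (Icc 0 1) := by
        gcongr
        exact eVariationOn_lineMap_Icc_le z y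

end Curves

section Walks

variable {V : Type*} {G : SimpleGraph V} {u v w : V} {X : Type*} [PseudoEMetricSpace X]

/-- The length of the polygonal curve through the points `f v`, for `v` running along `p`. -/
def walkLength (f : V → X) (p : G.Walk u v) : ℝ≥0∞ :=
  (p.darts.map fun e => edist (f e.fst) (f e.snd)).sum

@[simp]
theorem walkLength_nil (f : V → X) (u : V) : walkLength f (.nil : G.Walk u u) = 0 := by
  simp [walkLength]

@[simp]
theorem walkLength_cons (f : V → X) (h : G.Adj u v) (p : G.Walk v w) :
    walkLength f (.cons h p) = edist (f u) (f v) + walkLength f p := by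
  simp [walkLength]

theorem walkLength_bypass_le [DecidableEq V] (f : V → X) (p : G.Walk u v) :
    walkLength f p.bypass ≤ walkLength f p :=
  (p.darts_bypass_sublist_darts.map _).sum_le_sum fun _ _ => zero_le

theorem walkLength_ne_top {Y : Type*} [PseudoMetricSpace Y] (f : V → Y) (p : G.Walk u v) :
    walkLength f p ≠ ⊤ := by
  induction p with
  | nil => simp
  | cons h p ih => simpa [edist_ne_top] using ih

variable {E : Type*} [NormedAddCommGroup E] [NormedSpace ℝ E]

/-- The polygonal curve through the points `f v`, for `v` running along the walk. -/
def walkCurve (f : V → E) : {u v : V} → G.Walk u v → ℝ → E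
  | u, _, .nil => fun _ => f u
  | u, _, .cons (v := v) _ p => curveConcat (AffineMap.lineMap (f u) (f v)) (walkCurve f p)

variable {f : V → E} {U B : Set E}

theorem walkCurve_zero (f : V → E) (p : G.Walk u v) : walkCurve f p 0 = f u := by
  cases p <;> simp [walkCurve, curveConcat]

theorem lineMap_one_eq_walkCurve_zero (f : V → E) (a : E) (p : G.Walk u v) :
    AffineMap.lineMap a (f u) (1 : ℝ) = walkCurve f p 0 := by
  rw [walkCurve_zero, AffineMap.lineMap_apply_one]

theorem isCurveIn_walkCurve (hf : ∀ ⦃a b⦄, G.Adj a b → segment ℝ (f a) (f b) ⊆ U)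
    (p : G.Walk u v) (hv : f v ∈ U) : IsCurveIn U (f u) (f v) (walkCurve f p) := by
  induction p with
  | nil => exact ⟨continuousOn_const, fun _ _ => hv, rfl, rfl⟩
  | cons h p ih => exact (isCurveIn_lineMap (hf h)).concat (ih hv)

theorem measurable_walkCurve [MeasurableSpace E] [BorelSpace E] (f : V → E) (p : G.Walk u v) :
    Measurable (walkCurve f p) := by
  induction p with
  | nil => exact measurable_const
  | cons _ p ih =>
    exact measurable_curveConcat measurable_id
      (AffineMap.lineMap_continuous.measurable.comp (by fun_prop)) (ih.comp (by fun_prop))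

theorem eVariationOn_walkCurve_le (f : V → E) (p : G.Walk u v) :
    eVariationOn (walkCurve f p) (Icc 0 1) ≤ walkLength f p := by
  induction p with
  | nil => simp [walkCurve, eVariationOn_const]
  | @cons a b _ h p ih =>
    calc eVariationOn (walkCurve f (.cons h p)) (Icc 0 1)
        ≤ eVariationOn (AffineMap.lineMap (f a) (f b)) (Icc (0 : ℝ) 1) +
          eVariationOn (walkCurve f p) (Icc 0 1) :=
          eVariationOn_curveConcat_le (lineMap_one_eq_walkCurve_zero f _ p)
      _ ≤ edist (f a) (f b) + walkLength f p :=
          add_le_add (eVariationOn_lineMap_Icc_le _ _) ih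
      _ = walkLength f (.cons h p) := (walkLength_cons f h p).symm

theorem lengthIn_curveConcat_lineMap_le (a : E) (p : G.Walk u v) (B : Set E) :
    lengthIn (curveConcat (AffineMap.lineMap a (f u)) (walkCurve f p)) B ≤
      2 * ediam B + lengthIn (walkCurve f p) B := by
  refine (lengthIn_curveConcat_le (lineMap_one_eq_walkCurve_zero f a p) B).trans ?_
  rw [two_mul]
  gcongr
  exact lengthIn_lineMap_le a (f u) B

theorem lengthIn_walkCurve_le {A : Set V} [DecidablePred (· ∈ A)]
    (hA : ∀ ⦃a b⦄, G.Adj a b → (segment ℝ (f a) (f b) ∩ B).Nonempty → a ∈ A) (p : G.Walk u v) :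
    lengthIn (walkCurve f p) B ≤ 2 * ediam B * p.support.countP (· ∈ A) := by
  induction p with
  | nil => simp [lengthIn, walkCurve, eVariationOn_const]
  | @cons a b _ h p ih =>
    rw [SimpleGraph.Walk.support_cons, List.countP_cons]
    by_cases hmeet : (segment ℝ (f a) (f b) ∩ B).Nonempty
    · simp only [hA h hmeet, decide_true, if_true, Nat.cast_add, Nat.cast_one, mul_add, mul_one,
        add_comm _ (2 * ediam B)]
      exact (lengthIn_curveConcat_lineMap_le (f a) p B).trans (by gcongr)
    · have hmiss : MapsTo (AffineMap.lineMap (f a) (f b) : ℝ → E) (Icc 0 1) Bᶜ :=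
        fun t ht htB => hmeet ⟨_, mapsTo_lineMap_segment _ _ ht, htB⟩
      refine (lengthIn_curveConcat_le_right (lineMap_one_eq_walkCurve_zero f _ p) hmiss).trans ?_
      exact ih.trans (by gcongr; exact Nat.le_add_right _ _)

end Walks

section Packing

theorem ediam_ball_le_ofReal {X : Type*} [PseudoMetricSpace X] (x : X) (r : ℝ) :
    ediam (ball x r) ≤ ENNReal.ofReal (2 * r) := by
  refine ediam_le fun u hu v hv => ?_
  rw [mem_ball] at hu hv
  rw [edist_dist]
  exact ENNReal.ofReal_le_ofReal (by linarith [dist_triangle_right u v x])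

theorem packingNumber_ne_top_of_totallyBounded {X : Type*} [PseudoEMetricSpace X] {ε : ℝ≥0}
    {A : Set X} (hε : ε ≠ 0) (hA : TotallyBounded A) : packingNumber ε A ≠ ⊤ := by
  obtain ⟨N, -, hN, hcover⟩ :=
    exists_finite_isCover_of_totallyBounded (div_ne_zero hε two_ne_zero) hA
  refine ne_top_of_le_ne_top (encard_ne_top_iff.2 hN) ?_
  calc packingNumber ε A
      = packingNumber (2 * (ε / 2)) A := by rw [mul_div_cancel₀ ε two_ne_zero]
    _ ≤ externalCoveringNumber (ε / 2) A := packingNumber_two_mul_le_externalCoveringNumber _ _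
    _ ≤ N.encard := hcover.externalCoveringNumber_le_encard

theorem exists_encard_le_of_subset_closedBall (E : Type*) [NormedAddCommGroup E] [NormedSpace ℝ E]
    [ProperSpace E] {κ : ℝ} (hκ : 0 < κ) :
    ∃ N : ℕ, ∀ (x : E) (R : ℝ) (S : Set E), 0 < R → S ⊆ closedBall x R →
      S.Pairwise (fun u v => κ * R < dist u v) → S.encard ≤ N := by
  lift κ to ℝ≥0 using hκ.le
  obtain ⟨N, hN⟩ := ENat.ne_top_iff_exists.1 <| packingNumber_ne_top_of_totallyBounded
    (NNReal.coe_pos.1 hκ).ne' (isCompact_closedBall (0 : E) 1).totallyBounded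
  refine ⟨N, fun x R S hR hSx hS => ?_⟩
  set φ : E → E := fun v => R⁻¹ • (v - x)
  have hdist (u v : E) : dist (φ u) (φ v) = R⁻¹ * dist u v := by
    rw [dist_smul₀, dist_sub_right, Real.norm_of_nonneg (inv_nonneg.2 hR.le)]
  have hφ : Function.Injective φ :=
    (smul_right_injective E (inv_ne_zero hR.ne')).comp (sub_left_injective (b := x))
  have hball : φ '' S ⊆ closedBall 0 1 := by
    rintro _ ⟨v, hv, rfl⟩
    have hx : φ x = 0 := by simp [φ]
    rw [mem_closedBall, ← hx, hdist, inv_mul_le_one₀ hR]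
    exact hSx hv
  have hsep : IsSeparated κ (φ '' S) := by
    rintro _ ⟨u, hu, rfl⟩ _ ⟨v, hv, rfl⟩ huv
    rw [edist_nndist, ENNReal.coe_lt_coe, ← NNReal.coe_lt_coe, coe_nndist, hdist,
      lt_inv_mul_iff₀ hR, mul_comm]
    exact hS hu hv (ne_of_apply_ne φ huv)
  calc S.encard = (φ '' S).encard := (hφ.encard_image S).symm
    _ ≤ packingNumber κ (closedBall (0 : E) 1) := hsep.encard_le_packingNumber hball
    _ = N := hN.symm

theorem countP_mem_le_of_nodup {α : Type*} {A : Set α} [DecidablePred (· ∈ A)] {N : ℕ}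
    (hA : A.encard ≤ N) {l : List α} (hl : l.Nodup) : l.countP (· ∈ A) ≤ N := by
  classical
  have hsub : ((l.filter (· ∈ A)).toFinset : Set α) ⊆ A := fun a ha => by simp_all
  have hcard := (encard_le_encard hsub).trans hA
  rw [encard_coe_eq_coe_finsetCard, List.toFinset_card_of_nodup (hl.filter _)] at hcard
  rw [List.countP_eq_length_filter]
  exact_mod_cast hcard

end Packing

section WhitneyNet

variable {X : Type*} [PseudoMetricSpace X] {d : X → ℝ} {Z : Set X} {x y : X}

/-- A Whitney net of `{x | 0 < d x}`, where `d` is thought of as the distance to the complement: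
a net whose mesh at `z` is comparable to `d z`, in that its points are `d z / 16`-separated while
the balls of radius `d z / 8` cover. -/
structure IsWhitneyNet (d : X → ℝ) (Z : Set X) : Prop where
  pos : ∀ z ∈ Z, 0 < d z
  separated : Z.Pairwise fun u v => d u / 16 ≤ dist u v
  covering : ∀ y, 0 < d y → ∃ z ∈ Z, dist y z < d z / 8

theorem le_add_dist_of_lipschitzWith_one (hd : LipschitzWith 1 d) (x y : X) :
    d x ≤ d y + dist x y := by
  simpa using hd.le_add_mul x y

theorem ball_subset_setOf_pos (hd : LipschitzWith 1 d) (x : X) : ball x (d x) ⊆ {y | 0 < d y} := by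
  intro y hy
  rw [mem_ball'] at hy
  have := le_add_dist_of_lipschitzWith_one hd x y
  exact show 0 < d y by linarith

theorem exists_isWhitneyNet (hd : LipschitzWith 1 d) (hx : 0 < d x) :
    ∃ Z, x ∈ Z ∧ IsWhitneyNet d Z := by
  obtain ⟨Z, hxZ, hZ⟩ := zorn_subset_nonempty
    {Z | (∀ z ∈ Z, 0 < d z) ∧ Z.Pairwise fun u v => d u / 16 ≤ dist u v}
    (fun c hcP hc _ => ⟨⋃₀ c, ⟨fun z ⟨s, hs, hz⟩ => (hcP hs).1 z hz,
      (pairwise_sUnion hc.directedOn).2 fun s hs => (hcP hs).2⟩, fun s => subset_sUnion_of_mem⟩)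
    {x} ⟨by simpa using hx, pairwise_singleton _ _⟩
  refine ⟨Z, hxZ rfl, hZ.prop.1, hZ.prop.2, fun y hy => ?_⟩
  by_contra! hfar
  have hinsert : insert y Z ∈
      {Z | (∀ z ∈ Z, 0 < d z) ∧ Z.Pairwise fun u v => d u / 16 ≤ dist u v} := by
    refine ⟨forall_mem_insert.2 ⟨hy, hZ.prop.1⟩, hZ.prop.2.insert fun z hz _ => ?_⟩
    have := hfar z hz
    have := hZ.prop.1 z hz
    have := le_add_dist_of_lipschitzWith_one hd y z
    exact ⟨by linarith, by rw [dist_comm]; linarith⟩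
  have hyZ : y ∈ Z := hZ.le_of_ge hinsert (subset_insert y Z) (mem_insert y Z)
  linarith [hfar y hyZ, dist_self y]

theorem IsWhitneyNet.countable [TopologicalSpace.SeparableSpace X] (hZ : IsWhitneyNet d Z) :
    Z.Countable := by
  refine PairwiseDisjoint.countable_of_isOpen (s := fun z => ball z (d z / 32)) ?_
    (fun _ _ => isOpen_ball) fun z hz => nonempty_ball.2 (by linarith [hZ.pos z hz])
  intro u hu v hv huv
  have := hZ.separated hu hv huv
  have := hZ.separated hv hu huv.symm
  exact ball_disjoint_ball (by linarith [dist_comm u v])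

variable {E : Type*} [NormedAddCommGroup E] [NormedSpace ℝ E] [ProperSpace E] {d : E → ℝ}
  {Z : Set E}

theorem IsWhitneyNet.finite_setOf_lt (hZ : IsWhitneyNet d Z)
    (hb : Bornology.IsBounded {x | 0 < d x}) {η : ℝ} (hη : 0 < η) : {z ∈ Z | η < d z}.Finite := by
  obtain ⟨R, hR, hsub⟩ := hb.subset_closedBall_lt 0 0
  obtain ⟨N, hN⟩ := exists_encard_le_of_subset_closedBall E (κ := η / (32 * R)) (by positivity)
  refine finite_of_encard_le_coe (hN 0 R _ hR (fun z hz => hsub (hZ.pos z hz.1)) ?_)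
  intro u hu v hv huv
  have := hZ.separated hu.1 hv.1 huv
  have := hu.2
  calc η / (32 * R) * R = η / 32 := by field_simp
    _ < dist u v := by linarith

theorem IsWhitneyNet.exists_encard_le (hd : LipschitzWith 1 d) (hZ : IsWhitneyNet d Z) :
    ∃ N : ℕ, ∀ x r, 0 < d x → r ≤ d x / 2 →
      {v : Z | (ball (v : E) (d v / 2) ∩ ball x r).Nonempty}.encard ≤ N := by
  obtain ⟨N, hN⟩ := exists_encard_le_of_subset_closedBall E (κ := 1 / 100) (by norm_num)
  refine ⟨N, fun x r hx hr => ?_⟩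
  set A := {v : Z | (ball (v : E) (d v / 2) ∩ ball x r).Nonempty}
  have hnear {v : Z} (hv : v ∈ A) : dist (v : E) x ≤ 2 * d x ∧ d x / 3 < d v := by
    obtain ⟨w, hwv, hwx⟩ := hv
    rw [mem_ball] at hwv hwx
    have := dist_triangle_left (v : E) x w
    have := le_add_dist_of_lipschitzWith_one hd v x
    have := le_add_dist_of_lipschitzWith_one hd x v
    have := dist_comm x (v : E)
    exact ⟨by linarith, by linarith⟩
  rw [← Subtype.val_injective.encard_image A]
  refine hN x (2 * d x) _ (by positivity) ?_ ?_
  · rintro _ ⟨v, hv, rfl⟩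
    exact (hnear hv).1
  · rintro _ ⟨u, hu, rfl⟩ _ ⟨v, _, rfl⟩ huv
    have := hZ.separated u.2 v.2 huv
    linarith [(hnear hu).2]

end WhitneyNet

section Discretisation

theorem Icc_backward_induction {P : ℝ → Prop} {h : ℝ} (hh : 0 < h)
    (step : ∀ t ∈ Icc (0 : ℝ) 1, (∀ s ∈ Icc t 1, h ≤ s - t → P s) → P t) :
    ∀ t ∈ Icc (0 : ℝ) 1, P t := by
  have main (k : ℕ) : ∀ t ∈ Icc (0 : ℝ) 1, 1 - t < k * h → P t := by
    induction k with
    | zero => intro t ht hlt; linarith [ht.2, hlt.trans_eq (by simp : ((0 : ℕ) : ℝ) * h = 0)]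
    | succ k ih =>
      intro t ht hlt
      push_cast at hlt
      exact step t ht fun s hs hts => ih s ⟨ht.1.trans hs.1, hs.2⟩ (by linarith)
  obtain ⟨k, hk⟩ := exists_nat_gt (1 / h)
  rw [div_lt_iff₀ hh] at hk
  exact fun t ht => main k t ht (by linarith [ht.1])

variable {X : Type*} [PseudoMetricSpace X]

theorem exists_uniform_step {σ : ℝ → X} (hσ : ContinuousOn σ (Icc 0 1)) {ρ : X → ℝ}
    (hρ : Continuous ρ) (hpos : ∀ t ∈ Icc (0 : ℝ) 1, 0 < ρ (σ t)) :
    ∃ h > 0, ∀ t ∈ Icc (0 : ℝ) 1, dist (σ t) (σ 1) < ρ (σ t) ∨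
      ∃ s ∈ Icc t 1, h ≤ s - t ∧ dist (σ t) (σ s) = ρ (σ t) := by
  obtain ⟨η, hη, hηρ⟩ := isCompact_Icc.exists_forall_le' (hρ.comp_continuousOn hσ) hpos
  obtain ⟨h, hh, hunif⟩ := Metric.uniformContinuousOn_iff.1
    (isCompact_Icc.uniformContinuousOn_of_continuous hσ) η hη
  refine ⟨h, hh, fun t ht => or_iff_not_imp_left.2 fun hfar => ?_⟩
  have hcont : ContinuousOn (fun s => dist (σ t) (σ s)) (Icc t 1) :=
    (continuous_const.dist continuous_id).comp_continuousOn (hσ.mono (Icc_subset_Icc_left ht.1))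
  obtain ⟨s, hs, hdist⟩ := intermediate_value_Icc ht.2 hcont
    ⟨(dist_self (σ t)).trans_le (hpos t ht).le, not_lt.1 hfar⟩
  refine ⟨s, hs, ?_, hdist⟩
  by_contra! hlt
  have hclose : dist t s < h := by
    rw [dist_comm, Real.dist_eq, abs_of_nonneg (sub_nonneg.2 hs.1)]
    exact hlt
  exact (hunif t ht s ⟨ht.1.trans hs.1, hs.2⟩ hclose).not_ge ((hηρ t ht).trans_eq hdist.symm)

/-- The graph on a net `Z` joining any two of its points whose distance is less than half the
value of `d` at either of them. -/
def whitneyGraph (d : X → ℝ) (Z : Set X) : SimpleGraph Z where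
  Adj u v := u ≠ v ∧ dist (u : X) v < d u / 2 ∧ dist (u : X) v < d v / 2
  symm := ⟨fun _ _ h => ⟨h.1.symm, dist_comm (α := X) _ _ ▸ h.2.2, dist_comm (α := X) _ _ ▸ h.2.1⟩⟩
  loopless := ⟨fun _ h => h.1 rfl⟩

variable {d : X → ℝ} {Z : Set X}

theorem exists_walk_cons {u v w : Z} (hu : dist (u : X) v < d u / 2)
    (hv : dist (u : X) v < d v / 2) (p : (whitneyGraph d Z).Walk v w) :
    ∃ q : (whitneyGraph d Z).Walk u w,
      walkLength Subtype.val q ≤ edist (u : X) v + walkLength Subtype.val p := by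
  rcases eq_or_ne u v with rfl | huv
  · exact ⟨p, le_add_self⟩
  · exact ⟨.cons ⟨huv, hu, hv⟩ p, (walkLength_cons _ _ p).le⟩

theorem dist_lt_half_of_dist_le (hd : LipschitzWith 1 d) {p q u v : X} (hpu : dist p u < d u / 8)
    (hqv : dist q v < d v / 8) (hpq : dist p q ≤ d p / 16) :
    dist u v < d u / 2 ∧ dist u v < d v / 2 ∧ dist u v ≤ 5 / 8 * d p := by
  have hdp := le_add_dist_of_lipschitzWith_one hd p u
  have hdu := le_add_dist_of_lipschitzWith_one hd u p
  have hdp' := le_add_dist_of_lipschitzWith_one hd p q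
  have hdq := le_add_dist_of_lipschitzWith_one hd q p
  have hdq' := le_add_dist_of_lipschitzWith_one hd q v
  have hdv := le_add_dist_of_lipschitzWith_one hd v q
  have htri := dist_triangle4 u p q v
  rw [dist_comm u p] at hdu htri
  rw [dist_comm q p] at hdq
  rw [dist_comm v q] at hdv
  exact ⟨by linarith, by linarith, by linarith⟩

theorem exists_walk_of_dist_lt (hd : LipschitzWith 1 d) {p : X} {u v : Z} (hv : 0 < d v)
    (hpu : dist p u < d u / 8) (hpv : dist p v < d p / 16) :
    ∃ q : (whitneyGraph d Z).Walk u v, walkLength Subtype.val q ≤ ENNReal.ofReal (d v) := by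
  obtain ⟨huv, hvu, hle⟩ := dist_lt_half_of_dist_le hd hpu
    ((dist_self (v : X)).trans_lt (by linarith)) hpv.le
  obtain ⟨q, hq⟩ := exists_walk_cons huv hvu .nil
  refine ⟨q, hq.trans ?_⟩
  rw [walkLength_nil, add_zero, edist_dist]
  exact ENNReal.ofReal_le_ofReal (by linarith [hle, le_add_dist_of_lipschitzWith_one hd p v])

theorem edist_le_ten_mul_edist {p q u v : X} (huv : dist u v ≤ 5 / 8 * d p)
    (hpq : dist p q = d p / 16) : edist u v ≤ 10 * edist p q := by
  rw [edist_dist, edist_dist, ← ENNReal.ofReal_ofNat, ← ENNReal.ofReal_mul (by norm_num)]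
  exact ENNReal.ofReal_le_ofReal (by linarith)

-- Greedily cut `σ` into pieces spanning distance `d / 16` and replace each cut point by a net point
-- close to it: consecutive net points are adjacent, at distance at most ten times that span.
theorem IsWhitneyNet.exists_walk_walkLength_le (hd : LipschitzWith 1 d) (hZ : IsWhitneyNet d Z)
    {z x0 : Z} {σ : ℝ → X} (hσ : IsCurveIn {x | 0 < d x} (z : X) x0 σ) :
    ∃ p : (whitneyGraph d Z).Walk z x0,
      walkLength Subtype.val p ≤ 10 * eVariationOn σ (Icc 0 1) + ENNReal.ofReal (d x0) := by
  obtain ⟨h, hh, hstep⟩ := exists_uniform_step hσ.continuousOn (ρ := fun x => d x / 16)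
    (hd.continuous.div_const 16) fun t ht => div_pos (hσ.mapsTo ht) (by norm_num)
  suffices hmain : ∀ t ∈ Icc (0 : ℝ) 1, ∀ u : Z, dist (σ t) u < d u / 8 →
      ∃ p : (whitneyGraph d Z).Walk u x0, walkLength Subtype.val p ≤
        10 * eVariationOn σ (Icc t 1) + ENNReal.ofReal (d x0) by
    refine hmain 0 (left_mem_Icc.2 zero_le_one) z ?_
    rw [hσ.source, dist_self]
    linarith [hZ.pos z z.2]
  refine Icc_backward_induction hh fun t ht ih u hu => ?_
  rcases hstep t ht with hend | ⟨s, hs, hts, hspan⟩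
  · rw [hσ.target] at hend
    obtain ⟨q, hq⟩ := exists_walk_of_dist_lt hd (hZ.pos x0 x0.2) hu hend
    exact ⟨q, le_add_left hq⟩
  · obtain ⟨v, hvZ, hv⟩ := hZ.covering _ (hσ.mapsTo ⟨ht.1.trans hs.1, hs.2⟩)
    obtain ⟨huv, hvu, hle⟩ := dist_lt_half_of_dist_le hd hu hv hspan.le
    obtain ⟨p, hp⟩ := ih s hs hts ⟨v, hvZ⟩ hv
    obtain ⟨q, hq⟩ := exists_walk_cons (v := ⟨v, hvZ⟩) huv hvu p
    refine ⟨q, hq.trans ?_⟩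
    have hsplit := eVariationOn.Icc_add_Icc σ hs.1 hs.2 (mem_univ s)
    simp only [univ_inter] at hsplit
    calc edist (u : X) v + walkLength Subtype.val p
        ≤ 10 * eVariationOn σ (Icc t s) +
          (10 * eVariationOn σ (Icc s 1) + ENNReal.ofReal (d x0)) := by
          refine add_le_add ((edist_le_ten_mul_edist hle hspan).trans ?_) hp
          gcongr
          exact eVariationOn.edist_le σ (left_mem_Icc.2 hs.1) (right_mem_Icc.2 hs.1)
      _ = 10 * eVariationOn σ (Icc t 1) + ENNReal.ofReal (d x0) := by
          rw [← add_assoc, ← mul_add, hsplit]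

end Discretisation

section NetPaths

variable {E : Type*} [NormedAddCommGroup E] [NormedSpace ℝ E] {d : E → ℝ} {Z : Set E}

theorem segment_subset_ball_of_adj {u v : Z} (h : (whitneyGraph d Z).Adj u v) :
    segment ℝ (u : E) v ⊆ ball (u : E) (d u / 2) :=
  (convex_ball _ _).segment_subset (mem_ball_self (dist_nonneg.trans_lt h.2.1)) (mem_ball'.2 h.2.1)

theorem isCurveIn_walkCurve_whitneyGraph (hd : LipschitzWith 1 d) (hZ : IsWhitneyNet d Z) {u v : Z}
    (p : (whitneyGraph d Z).Walk u v) :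
    IsCurveIn {x | 0 < d x} (u : E) v (walkCurve Subtype.val p) := by
  refine isCurveIn_walkCurve (fun a b hab => ?_) p (hZ.pos v v.2)
  refine (segment_subset_ball_of_adj hab).trans ((ball_subset_ball ?_).trans
    (ball_subset_setOf_pos hd a))
  linarith [hZ.pos a a.2]

theorem IsWhitneyNet.exists_isPath_walkLength_le (hd : LipschitzWith 1 d) (hZ : IsWhitneyNet d Z)
    (hconn : IsConnected {x | 0 < d x}) (z x0 : Z) :
    ∃ p : (whitneyGraph d Z).Walk z x0, p.IsPath ∧
      walkLength Subtype.val p ≤ 36 * geoDist {x | 0 < d x} (x0 : E) z := by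
  classical
  set D := geoDist {x | 0 < d x} (x0 : E) z
  rcases eq_or_ne z x0 with rfl | hne
  · exact ⟨.nil, .nil, by simp⟩
  have hpos := hZ.pos x0 x0.2
  have hsep : d x0 / 16 ≤ dist (z : E) x0 := by
    rw [dist_comm]
    exact hZ.separated x0.2 z.2 (Subtype.coe_ne_coe.2 hne.symm)
  have hD : ENNReal.ofReal (d x0) ≤ 16 * D := by
    refine le_trans ?_ (mul_le_mul_right (edist_le_geoDist _ _ _) 16)
    rw [edist_dist, ← ENNReal.ofReal_ofNat, ← ENNReal.ofReal_mul (by norm_num)]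
    exact ENNReal.ofReal_le_ofReal (by linarith)
  have hD0 : D ≠ 0 := fun h => by simp [h, hpos.not_ge] at hD
  have hopen : IsOpen {x | 0 < d x} := isOpen_lt continuous_const hd.continuous
  obtain ⟨γ, hγ⟩ := exists_isCurveIn_of_isPathConnected
    (hopen.isConnected_iff_isPathConnected.1 hconn) (hZ.pos z z.2) hpos
  obtain ⟨σ, hσ, hσD⟩ := exists_isCurveIn_eVariationOn_le_two_mul_geoDist hD0 hγ
  obtain ⟨p, hp⟩ := hZ.exists_walk_walkLength_le hd hσ
  refine ⟨p.bypass, p.bypass_isPath, ?_⟩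
  calc walkLength Subtype.val p.bypass
      ≤ walkLength Subtype.val p := walkLength_bypass_le _ p
    _ ≤ 10 * (2 * D) + 16 * D := hp.trans (by gcongr)
    _ = 36 * D := by ring

end NetPaths

section Selection

theorem exists_measurable_mem_of_countable {α ι : Type*} [MeasurableSpace α] [MeasurableSpace ι]
    [Countable ι] [Nonempty ι] {A : ι → Set α} (hA : ∀ i, MeasurableSet (A i)) :
    ∃ c : α → ι, Measurable c ∧ ∀ a ∈ ⋃ i, A i, a ∈ A (c a) := by
  classical
  obtain ⟨e, he⟩ := exists_surjective_nat ι
  have hex (a : α) : ∃ k, a ∈ A (e k) ∨ a ∉ ⋃ i, A i := by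
    by_cases ha : a ∈ ⋃ i, A i
    · obtain ⟨i, hi⟩ := mem_iUnion.1 ha
      obtain ⟨k, rfl⟩ := he i
      exact ⟨k, Or.inl hi⟩
    · exact ⟨0, Or.inr ha⟩
  refine ⟨fun a => e (Nat.find (hex a)), measurable_from_nat.comp (measurable_find hex fun k =>
    (hA (e k)).union (MeasurableSet.iUnion hA).compl), fun a ha => ?_⟩
  exact (Nat.find_spec (hex a)).resolve_right (not_not.2 ha)

variable {X : Type*} [PseudoMetricSpace X] [TopologicalSpace.SeparableSpace X] [MeasurableSpace X]
  [OpensMeasurableSpace X] {d : X → ℝ} {Z : Set X}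

theorem IsWhitneyNet.exists_measurable_near (hd : LipschitzWith 1 d) (hZ : IsWhitneyNet d Z)
    (x0 : Z) : ∃ c : X → Z, Measurable c ∧ ∀ y, 0 < d y →
      dist y (c y) < d (c y) / 8 ∧ dist y (c y) ≤ 2 * dist y x0 := by
  classical
  have := hZ.countable.to_subtype
  have : Nonempty Z := ⟨x0⟩
  obtain ⟨c, hcm, hc⟩ := exists_measurable_mem_of_countable
    (A := fun z : Z => ball (z : X) (d z / 8)) fun _ => measurableSet_ball
  refine ⟨fun y => if y ∈ ball (x0 : X) (d x0 / 8) then x0 else c y,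
    .ite measurableSet_ball measurable_const hcm, fun y hy => ?_⟩
  dsimp only
  split_ifs with hyx0
  · exact ⟨hyx0, by linarith [dist_nonneg (x := y) (y := (x0 : X))]⟩
  · obtain ⟨z, hzZ, hyz⟩ := hZ.covering y hy
    have hyc : dist y (c y) < d (c y) / 8 := hc y (mem_iUnion.2 ⟨⟨z, hzZ⟩, hyz⟩)
    rw [mem_ball, not_lt] at hyx0
    have hdc := le_add_dist_of_lipschitzWith_one hd (c y) y
    have hdy := le_add_dist_of_lipschitzWith_one hd y x0
    rw [dist_comm] at hdc
    exact ⟨hyc, by linarith⟩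

end Selection

section NetCurve

variable {E : Type*} [NormedAddCommGroup E] [NormedSpace ℝ E] {d : E → ℝ} {Z : Set E} {x0 : Z}

/-- The curve which runs from `y` straight to the net point `c y`, and from there to `x0` along the
polygon prescribed by `p`. -/
def netCurve (c : E → Z) (p : ∀ z : Z, (whitneyGraph d Z).Walk z x0) (y : E) : ℝ → E :=
  curveConcat (AffineMap.lineMap y (c y : E)) (walkCurve Subtype.val (p (c y)))

variable {c : E → Z} {p : ∀ z : Z, (whitneyGraph d Z).Walk z x0} {x y : E} {r : ℝ}

theorem segment_subset_ball_of_dist_lt {z : E} (h : dist y z < r) : segment ℝ y z ⊆ ball z r :=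
  (convex_ball z r).segment_subset h (mem_ball_self (dist_nonneg.trans_lt h))

theorem segment_subset_setOf_pos (hd : LipschitzWith 1 d) {z : E} (h : dist y z < d z / 8) :
    segment ℝ y z ⊆ {x | 0 < d x} := by
  refine (segment_subset_ball_of_dist_lt (h.trans_le ?_)).trans (ball_subset_setOf_pos hd z)
  linarith [dist_nonneg.trans_lt h]

theorem isCurveIn_netCurve (hd : LipschitzWith 1 d) (hZ : IsWhitneyNet d Z)
    (hy : dist y (c y) < d (c y) / 8) :
    IsCurveIn {x | 0 < d x} y (x0 : E) (netCurve c p y) :=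
  (isCurveIn_lineMap (segment_subset_setOf_pos hd hy)).concat
    (isCurveIn_walkCurve_whitneyGraph hd hZ (p (c y)))

theorem measurable_netCurve [SecondCountableTopology E] [MeasurableSpace E] [BorelSpace E]
    (hZ : Z.Countable) (hc : Measurable c) :
    Measurable fun q : ℝ × E => netCurve c p q.2 q.1 := by
  have := hZ.to_subtype
  have hwalk : Measurable fun q : Z × ℝ => walkCurve Subtype.val (p q.1) q.2 :=
    measurable_from_prod_countable_right fun z => measurable_walkCurve _ (p z)
  refine measurable_curveConcat measurable_fst ?_ ?_
  · simp only [AffineMap.lineMap_apply_module]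
    fun_prop
  · exact hwalk.comp (by fun_prop : Measurable fun q : ℝ × E => (c q.2, 2 * q.1 - 1))

theorem eVariationOn_netCurve_le (c : E → Z) (p : ∀ z : Z, (whitneyGraph d Z).Walk z x0) (y : E) :
    eVariationOn (netCurve c p y) (Icc 0 1) ≤
      edist y (c y) + walkLength Subtype.val (p (c y)) :=
  (eVariationOn_curveConcat_le (lineMap_one_eq_walkCurve_zero _ _ _)).trans <|
    add_le_add (eVariationOn_lineMap_Icc_le _ _) (eVariationOn_walkCurve_le _ _)

theorem eVariationOn_netCurve_le_mul_geoDist (hd : LipschitzWith 1 d)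
    (hp : ∀ z, walkLength Subtype.val (p z) ≤ 36 * geoDist {x | 0 < d x} (x0 : E) z)
    (hy : dist y (c y) < d (c y) / 8) (hyx0 : dist y (c y) ≤ 2 * dist y x0) :
    eVariationOn (netCurve c p y) (Icc 0 1) ≤ 110 * geoDist {x | 0 < d x} (x0 : E) y := by
  set D := geoDist {x | 0 < d x} (x0 : E) y
  have hedist : edist y (c y) ≤ 2 * D := by
    refine le_trans ?_ (mul_le_mul_right (edist_le_geoDist _ _ _) 2)
    rw [edist_dist, edist_dist, ← ENNReal.ofReal_ofNat, ← ENNReal.ofReal_mul (by norm_num)]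
    exact ENNReal.ofReal_le_ofReal hyx0
  have hgeo : geoDist {x | 0 < d x} (x0 : E) (c y) ≤ edist y (c y) + D := by
    rw [edist_comm]
    exact geoDist_le_edist_add_geoDist (segment_symm ℝ (c y : E) y ▸ segment_subset_setOf_pos hd hy)
  calc eVariationOn (netCurve c p y) (Icc 0 1)
      ≤ edist y (c y) + walkLength Subtype.val (p (c y)) := eVariationOn_netCurve_le c p y
    _ ≤ 2 * D + 36 * (2 * D + D) := by
        refine add_le_add hedist ((hp _).trans ?_)
        gcongr
        exact hgeo.trans (by gcongr)
    _ = 110 * D := by ring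

theorem lengthIn_netCurve_ball_le {N : ℕ} (hp : (p (c y)).IsPath)
    (hN : {v : Z | (ball (v : E) (d v / 2) ∩ ball x r).Nonempty}.encard ≤ N) :
    lengthIn (netCurve c p y) (ball x r) ≤ ENNReal.ofReal (4 * (N + 1) * r) := by
  classical
  have hcount := countP_mem_le_of_nodup hN hp.support_nodup
  have hwalk := lengthIn_walkCurve_le (f := Subtype.val) (B := ball x r)
    (A := {v : Z | (ball (v : E) (d v / 2) ∩ ball x r).Nonempty})
    (fun a b hab hmeet => hmeet.mono (by gcongr; exact segment_subset_ball_of_adj hab)) (p (c y))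
  calc lengthIn (netCurve c p y) (ball x r)
      ≤ 2 * ediam (ball x r) + 2 * ediam (ball x r) * N :=
        (lengthIn_curveConcat_lineMap_le y (p (c y)) _).trans <| by
          gcongr
          exact hwalk.trans (by gcongr)
    _ ≤ 2 * ENNReal.ofReal (2 * r) + 2 * ENNReal.ofReal (2 * r) * N := by
        gcongr <;> exact ediam_ball_le_ofReal x r
    _ = ENNReal.ofReal (2 * (N + 1)) * ENNReal.ofReal (2 * r) := by
        rw [ENNReal.ofReal_mul (p := 2) (q := N + 1) (by norm_num),
          ENNReal.ofReal_add (by positivity) (by norm_num), ENNReal.ofReal_natCast,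
          ENNReal.ofReal_ofNat, ENNReal.ofReal_one]
        ring
    _ = ENNReal.ofReal (4 * (N + 1) * r) := by
        rw [← ENNReal.ofReal_mul (by positivity)]
        ring_nf

theorem exists_lt_netCurve [ProperSpace E] (hd : LipschitzWith 1 d) (hZ : IsWhitneyNet d Z)
    (hb : Bornology.IsBounded {x | 0 < d x}) (hc : ∀ y, 0 < d y → dist y (c y) < d (c y) / 8)
    {ε : ℝ} (hε : 0 < ε) :
    ∃ δ > 0, ∀ y, ε < d y → ∀ t ∈ Icc (0 : ℝ) 1, δ < d (netCurve c p y t) := by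
  have hcurve (z : Z) := isCurveIn_walkCurve_whitneyGraph hd hZ (p z)
  have hfin : {z : Z | ε / 2 < d z}.Finite :=
    ((hZ.finite_setOf_lt hb (half_pos hε)).preimage Subtype.val_injective.injOn).subset
      fun z hz => ⟨z.2, hz⟩
  have hcompact : IsCompact (⋃ z ∈ {z : Z | ε / 2 < d z}, walkCurve Subtype.val (p z) '' Icc 0 1) :=
    hfin.isCompact_biUnion fun z _ => isCompact_Icc.image_of_continuousOn (hcurve z).continuousOn
  obtain ⟨δ, hδ, hδle⟩ := hcompact.exists_forall_le' hd.continuous.continuousOn (a := 0) <| by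
    simp only [mem_iUnion]
    rintro _ ⟨z, -, t, ht, rfl⟩
    exact (hcurve z).mapsTo ht
  refine ⟨min (δ / 2) (ε / 4), by positivity, fun y hy => ?_⟩
  have hyc := hc y (hε.trans hy)
  have hdc : ε / 2 < d (c y) := by
    linarith [le_add_dist_of_lipschitzWith_one hd y (c y)]
  have hseg : segment ℝ y (c y) ⊆ {w | min (δ / 2) (ε / 4) < d w} := by
    intro w hw
    have hwc := mem_ball'.1 (segment_subset_ball_of_dist_lt hyc hw)
    have := le_add_dist_of_lipschitzWith_one hd (c y) w
    exact (min_le_right _ _).trans_lt (show ε / 4 < d w by linarith)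
  have hwalk : MapsTo (walkCurve Subtype.val (p (c y))) (Icc 0 1)
      {w | min (δ / 2) (ε / 4) < d w} := by
    intro t ht
    have := hδle _ (mem_biUnion hdc (mem_image_of_mem _ ht))
    exact (min_le_left _ _).trans_lt (show δ / 2 < d _ by linarith)
  exact ((isCurveIn_lineMap hseg).concat { hcurve (c y) with mapsTo := hwalk }).mapsTo

end NetCurve

section HatSet

theorem nonempty_compl_of_isBounded_interior {E : Type*} [NormedAddCommGroup E] [NormedSpace ℝ E]
    [Nontrivial E] {s : Set E} (hs : Bornology.IsBounded (interior s)) : sᶜ.Nonempty := by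
  rw [nonempty_compl]
  rintro rfl
  exact NormedSpace.unbounded_univ ℝ E (interior_univ (X := E) ▸ hs)

theorem setOf_infDist_compl_pos {X : Type*} [PseudoMetricSpace X] {s : Set X}
    (hs : sᶜ.Nonempty) : {x | 0 < infDist x sᶜ} = interior s := by
  ext x
  rw [mem_ofPred_eq, ← infDist_closure, ← isClosed_closure.notMem_iff_infDist_pos hs.closure,
    closure_compl, notMem_compl_iff]

theorem interior_subset_closure_of_measure_diff_eq_zero {X : Type*} [TopologicalSpace X]
    [MeasurableSpace X] {μ : Measure X} [μ.IsOpenPosMeasure] {s t : Set X}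
    (h : μ (t \ s) = 0) : interior t ⊆ closure s := by
  rw [← sdiff_eq_empty]
  refine (isOpen_interior.sdiff isClosed_closure).eq_empty_of_measure_zero (μ := μ) ?_
  exact measure_mono_null (sdiff_subset_sdiff interior_subset subset_closure) h

variable {n : ℕ} {Ω Ot : Set (En n)}

theorem hatSet_eq_setOf_infDist_pos (Ot : Set (En n)) : hatSet Ot = {x | 0 < infDist x Otᶜ} := by
  refine subset_antisymm (fun x hx => hx.2) fun x hx => ⟨?_, hx⟩
  by_contra hxOt
  exact (show 0 < infDist x Otᶜ from hx).ne' (infDist_zero_of_mem hxOt)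

theorem isOpen_hatSet (Ot : Set (En n)) : IsOpen (hatSet Ot) := by
  rw [hatSet_eq_setOf_infDist_pos]
  exact isOpen_lt continuous_const (continuous_infDist_pt _)

theorem hatSet_subset_closure (hnull : volume (Ot \ Ω) = 0) : hatSet Ot ⊆ closure Ω :=
  (interior_maximal (sep_subset _ _) (isOpen_hatSet Ot)).trans
    (interior_subset_closure_of_measure_diff_eq_zero hnull)

theorem subset_hatSet [NeZero n] (hopen : IsOpen Ω) (hbdd : Bornology.IsBounded Ω) (hcov : Ω ⊆ Ot)
    (hnull : volume (Ot \ Ω) = 0) : Ω ⊆ hatSet Ot := by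
  have hOt : Bornology.IsBounded (interior Ot) :=
    hbdd.closure.subset (interior_subset_closure_of_measure_diff_eq_zero hnull)
  rw [hatSet_eq_setOf_infDist_pos,
    setOf_infDist_compl_pos (nonempty_compl_of_isBounded_interior hOt)]
  exact interior_maximal hcov hopen

end HatSet

theorem stmt_4_general {E : Type*} [NormedAddCommGroup E] [NormedSpace ℝ E] [ProperSpace E]
    [Nontrivial E] [MeasurableSpace E] [BorelSpace E] {U : Set E} (hopen : IsOpen U)
    (hconn : IsConnected U) (hbdd : Bornology.IsBounded U) {x0 : E} (hx0 : x0 ∈ U) :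
    ∃ γ : E → ℝ → E,
      (∀ y ∈ U, IsCurveIn U y x0 (γ y) ∧ eVariationOn (γ y) (Icc 0 1) < ⊤) ∧
      Measurable (fun q : ℝ × E => γ q.2 q.1) ∧
      (∃ C > 0,
        (∀ x ∈ U, ∀ y ∈ U, ∀ r ≤ infDist x Uᶜ / 2,
          lengthIn (γ y) (ball x r) ≤ ENNReal.ofReal (C * r)) ∧
        ∀ y ∈ U, eVariationOn (γ y) (Icc 0 1) ≤ ENNReal.ofReal C * geoDist U x0 y) ∧
      ∀ ε > 0, ∃ δ > 0, ∀ y ∈ U, ε < infDist y Uᶜ →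
        ∀ t ∈ Icc (0 : ℝ) 1, δ < infDist (γ y t) Uᶜ := by
  set d : E → ℝ := fun x => infDist x Uᶜ
  have hd : LipschitzWith 1 d := lipschitz_infDist_pt Uᶜ
  have hU : {x | 0 < d x} = U :=
    (setOf_infDist_compl_pos (nonempty_compl_of_isBounded_interior
      (hopen.interior_eq.symm ▸ hbdd))).trans hopen.interior_eq
  have hpos {x : E} (hx : x ∈ U) : 0 < d x := hU.ge hx
  obtain ⟨Z, hx0Z, hZ⟩ := exists_isWhitneyNet hd (hpos hx0)
  obtain ⟨N, hN⟩ := hZ.exists_encard_le hd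
  obtain ⟨c, hcm, hc⟩ := hZ.exists_measurable_near hd ⟨x0, hx0Z⟩
  choose p hpath hlen using fun z => hZ.exists_isPath_walkLength_le hd (hU ▸ hconn) z ⟨x0, hx0Z⟩
  have hcurve {y : E} (hy : y ∈ U) : IsCurveIn U y x0 (netCurve c p y) :=
    hU ▸ isCurveIn_netCurve (p := p) hd hZ (hc y (hpos hy)).1
  have hgeo {y : E} (hy : y ∈ U) :
      eVariationOn (netCurve c p y) (Icc 0 1) ≤ 110 * geoDist U x0 y :=
    hU ▸ eVariationOn_netCurve_le_mul_geoDist hd hlen (hc y (hpos hy)).1 (hc y (hpos hy)).2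
  have hfin (y : E) : eVariationOn (netCurve c p y) (Icc 0 1) < ⊤ :=
    (eVariationOn_netCurve_le c p y).trans_lt
      (ENNReal.add_lt_top.2 ⟨edist_lt_top _ _, (walkLength_ne_top _ _).lt_top⟩)
  refine ⟨netCurve c p, fun y hy => ⟨hcurve hy, hfin y⟩, measurable_netCurve hZ.countable hcm,
    ⟨4 * (N + 1) + 110, by positivity, fun x hx y _ r hr => ?_, fun y hy => ?_⟩, fun ε hε => ?_⟩
  · refine (lengthIn_netCurve_ball_le (hpath _) (hN x r (hpos hx) hr)).trans ?_
    rw [ENNReal.ofReal_mul (q := r) (by positivity), ENNReal.ofReal_mul (q := r) (by positivity)]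
    gcongr
    linarith
  · refine (hgeo hy).trans (mul_le_mul_left ?_ _)
    rw [← ENNReal.ofReal_ofNat]
    exact ENNReal.ofReal_le_ofReal (by linarith [N.cast_nonneg (α := ℝ)])
  · obtain ⟨δ, hδ, hlt⟩ := exists_lt_netCurve (p := p) hd hZ (hU ▸ hbdd)
      (fun y hy => (hc y hy).1) hε
    exact ⟨δ, hδ, fun y _ => hlt y⟩

/-- (Path system, Lemma 2.1.) For a bounded domain `Ω ⊆ ℝⁿ`, its
associated cover `Ω̂`, and `x0 ∈ Ω`, there is a family of rectifiable curves
`γ_y : [0,1] → Ω̂` with: (a) `γ(0,y) = y`, `γ(1,y) = x0`; (b) `(t,y) ↦ γ(t,y)`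
measurable; (c) for a constant `C > 0`, `l(γ_y ∩ B(x,r)) ≤ C r` whenever `x, y ∈ Ω`
and `r ≤ d̂(x)/2`, and `l(γ_y) ≤ C d_Ω̂(y)`; (d) for all small `ε > 0` there is
`δ > 0` with `γ_y ⊆ Ω̂_δ` for all `y ∈ Ω̂_ε`. -/
theorem stmt_4 (n : ℕ) (hn : 1 ≤ n) (Ω Ot : Set (En n))
    (hΩopen : IsOpen Ω) (hΩconn : IsConnected Ω) (hΩbdd : Bornology.IsBounded Ω)
    (hcov : Ω ⊆ Ot) (hcovnull : volume (Ot \ Ω) = 0)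
    (x0 : En n) (hx0 : x0 ∈ Ω) :
    ∃ γ : En n → ℝ → En n,
      (∀ y ∈ hatSet Ot,
        ContinuousOn (γ y) (Set.Icc 0 1) ∧
        (∀ t ∈ Set.Icc (0:ℝ) 1, γ y t ∈ hatSet Ot) ∧
        eVariationOn (γ y) (Set.Icc 0 1) < ⊤ ∧
        γ y 0 = y ∧ γ y 1 = x0) ∧
      Measurable (fun q : ℝ × En n => γ q.2 q.1) ∧
      (∃ C : ℝ, 0 < C ∧
        (∀ x ∈ Ω, ∀ y ∈ Ω, ∀ r : ℝ, r ≤ Metric.infDist x (hatSet Ot)ᶜ / 2 →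
          eVariationOn (γ y) {t ∈ Set.Icc (0:ℝ) 1 | γ y t ∈ Metric.ball x r} ≤
            ENNReal.ofReal (C * r)) ∧
        (∀ y ∈ hatSet Ot,
          eVariationOn (γ y) (Set.Icc 0 1) ≤
            ENNReal.ofReal C * geoDist (hatSet Ot) x0 y)) ∧
      (∃ ε0 : ℝ, 0 < ε0 ∧ ∀ ε : ℝ, 0 < ε → ε < ε0 → ∃ δ : ℝ, 0 < δ ∧
        ∀ y ∈ hatSet Ot, ε < Metric.infDist y (hatSet Ot)ᶜ →
          ∀ t ∈ Set.Icc (0:ℝ) 1, δ < Metric.infDist (γ y t) (hatSet Ot)ᶜ) := by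
  have : NeZero n := ⟨by lia⟩
  have hsub : Ω ⊆ hatSet Ot := subset_hatSet hΩopen hΩbdd hcov hcovnull
  have hcl : hatSet Ot ⊆ closure Ω := hatSet_subset_closure hcovnull
  obtain ⟨γ, hγ, hmeas, ⟨C, hC, hball, hlen⟩, hinner⟩ := stmt_4_general (isOpen_hatSet Ot)
    (hΩconn.subset_closure hsub hcl) (hΩbdd.closure.subset hcl) (hsub hx0)
  refine ⟨γ, fun y hy => ?_, hmeas, ⟨C, hC, fun x hx y hy => hball x (hsub hx) y (hsub hy), hlen⟩,
    1, one_pos, fun ε hε _ => hinner ε hε⟩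
  obtain ⟨hcurve, hfin⟩ := hγ y hy
  exact ⟨hcurve.continuousOn, hcurve.mapsTo, hfin, hcurve.source, hcurve.target⟩
end
end
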